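/- arXiv:1811.07735 — 2 statements merged into one kernel-verified Lean document; each statement's English description precedes it below -/
import Mathlib

section
/- Let F be a foliation of degree 4 on ℙ²(ℂ) defined by ω = a dx + b dy + c dz (a, b, c ∈ ℂ[x,y,z] homogeneous of degree 5 without common factor, xa + yb + zc = 0), and assume F admits 12 pairwise non-proportional invariant lines (i.e. F is reduced convex). Then ω is linearly conjugate either to the Fermat foliation ω_F = z(yz³ − y⁴)dx + z(x⁴ − xz³)dy + (xy⁴ − x⁴y)dz, or to the Hesse pencil ω_H = yz(2x³ − y³ − z³)dx + xz(2y³ − x³ − z³)dy − xy(x³ + y³ − 2z³)dz. -/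
open MvPolynomial

noncomputable section

/-- Polynomials in three variables `x = X 0`, `y = X 1`, `z = X 2` over `ℂ`. -/
abbrev P3 : Type := MvPolynomial (Fin 3) ℂ

/-- The linear form `αx + βy + γz` with coefficient vector `l = (α, β, γ)`. -/
def lin (l : Fin 3 → ℂ) : P3 := C (l 0) * X 0 + C (l 1) * X 1 + C (l 2) * X 2

/-- The line `{αx + βy + γz = 0}` is invariant by the foliation defined by
`ω = a dx + b dy + c dz`: the linear form divides the coefficients of `ω ∧ dℓ`. -/
def InvLine (a b c : P3) (l : Fin 3 → ℂ) : Prop :=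
  l ≠ 0 ∧
  lin l ∣ (C (l 1) * a - C (l 0) * b) ∧
  lin l ∣ (C (l 2) * a - C (l 0) * c) ∧
  lin l ∣ (C (l 2) * b - C (l 1) * c)

/-- `(a, b, c)` defines a foliation of degree `d` on `ℙ²(ℂ)`: homogeneous of degree
`d+1`, without common factor, satisfying the Euler condition. -/
def IsFoliation (d : ℕ) (a b c : P3) : Prop :=
  a.IsHomogeneous (d + 1) ∧ b.IsHomogeneous (d + 1) ∧ c.IsHomogeneous (d + 1) ∧
  (∀ p : P3, p ∣ a → p ∣ b → p ∣ c → IsUnit p) ∧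
  X 0 * a + X 1 * b + X 2 * c = 0

/-- Composition of a polynomial with the linear map of `ℂ³` given by the matrix `M`. -/
def compM (M : Matrix (Fin 3) (Fin 3) ℂ) (p : P3) : P3 :=
  aeval (fun i => ∑ j, C (M i j) * X j) p

/-- The coefficients of the pullback `M*ω`, i.e. `Mᵀ·(a∘M, b∘M, c∘M)`. -/
def pullbackM (M : Matrix (Fin 3) (Fin 3) ℂ) (a b c : P3) : Fin 3 → P3 :=
  fun i => C (M 0 i) * compM M a + C (M 1 i) * compM M b + C (M 2 i) * compM M c

/-- The foliations defined by `ω = a dx + b dy + c dz` and `ω' = a' dx + b' dy + c' dz`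
are linearly conjugate: `M*ω = λω'` for some `M ∈ GL₃(ℂ)` and `λ ∈ ℂ \ {0}`. -/
def LinConj3 (a b c a' b' c' : P3) : Prop :=
  ∃ M : Matrix (Fin 3) (Fin 3) ℂ, M.det ≠ 0 ∧ ∃ lam : ℂ, lam ≠ 0 ∧
    pullbackM M a b c 0 = C lam * a' ∧
    pullbackM M a b c 1 = C lam * b' ∧
    pullbackM M a b c 2 = C lam * c'

/-- The Fermat foliation of degree 4, `ω_F = z(yz³ − y⁴)dx + z(x⁴ − xz³)dy + (xy⁴ − x⁴y)dz`. -/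
def aF : P3 := X 2 * (X 1 * X 2 ^ 3 - X 1 ^ 4)
def bF : P3 := X 2 * (X 0 ^ 4 - X 0 * X 2 ^ 3)
def cF : P3 := X 0 * X 1 ^ 4 - X 0 ^ 4 * X 1

/-- The Hesse pencil of degree 4,
`ω_H = yz(2x³ − y³ − z³)dx + xz(2y³ − x³ − z³)dy − xy(x³ + y³ − 2z³)dz`. -/
def aH : P3 := X 1 * X 2 * (2 * X 0 ^ 3 - X 1 ^ 3 - X 2 ^ 3)
def bH : P3 := X 0 * X 2 * (2 * X 1 ^ 3 - X 0 ^ 3 - X 2 ^ 3)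
def cH : P3 := -(X 0 * X 1 * (X 0 ^ 3 + X 1 ^ 3 - 2 * X 2 ^ 3))

/-!
Move one of the `3 d` lines to `z = 0`; the others fall into parallel families, one for each
point `r` of that line through which they pass. If `f` and `g` are the restrictions to `z = 0`
of the coefficients of `dx` and `dy`, divided by `z`, a family of `k` lines makes `r f + g`
vanish to order `k` at `r`, hence the Wronskian of `f` and `g`, of degree at most `2 d - 2`, to
order `k - 1`. So the `3 d - 1` lines make up exactly `d + 1` families, and the `d + 1` points
`r` are the only singularities on `z = 0`. The Camacho–Sad index is `1` at each point on at
least three of the lines, and the indices along a line sum to `1`, so each line has a simple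
crossing, where only two of the lines meet. If it were the only one, the index there would be
`1 - d`. As the indices of the two lines at a simple crossing are inverse to each other and
`(1 - d) ^ 2 ≠ 1` for `d ≥ 3`, some line has two simple crossings. Send it to infinity: for
`d = 4` the families have sizes `(4, 4, 1, 1, 1)`, `(4, 3, 2, 1, 1)` or `(3, 3, 3, 1, 1)`. With
the first two families horizontal and vertical, comparing coefficients along the lines of the
next two gives the Fermat foliation, a contradiction, and the Hesse pencil respectively.
-/

open Matrix

/-! ### Pulling back by linear maps -/

section Pullback

variable (M N : Matrix (Fin 3) (Fin 3) ℂ) (p q : P3)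

@[simp] lemma compM_add : compM M (p + q) = compM M p + compM M q := map_add _ p q

@[simp] lemma compM_sub : compM M (p - q) = compM M p - compM M q := map_sub _ p q

@[simp] lemma compM_mul : compM M (p * q) = compM M p * compM M q := map_mul _ p q

@[simp] lemma compM_neg : compM M (-p) = -compM M p := map_neg _ p

@[simp] lemma compM_pow (n : ℕ) : compM M (p ^ n) = compM M p ^ n := map_pow _ p n

@[simp] lemma compM_C (r : ℂ) : compM M (C r) = C r := algHom_C _ r

@[simp] lemma compM_X (i : Fin 3) : compM M (X i) = lin (M i) := by
  simp only [compM, aeval_X, Fin.sum_univ_three, lin]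

lemma eval_compM (v : Fin 3 → ℂ) : eval v (compM M p) = eval (M *ᵥ v) p := by
  induction p using MvPolynomial.induction_on with
  | C r => simp only [compM_C, eval_C]
  | add p q hp hq => simp only [compM_add, map_add, hp, hq]
  | mul_X p i hp =>
    simp only [compM_mul, compM_X, map_mul, hp, eval_X, lin, map_add, eval_C, mulVec, dotProduct,
      Fin.sum_univ_three]

lemma compM_compM : compM N (compM M p) = compM (M * N) p :=
  MvPolynomial.funext fun v => by simp only [eval_compM, mulVec_mulVec]

lemma compM_one : compM 1 p = p :=
  MvPolynomial.funext fun v => by rw [eval_compM, one_mulVec]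

lemma compM_lin (l : Fin 3 → ℂ) : compM M (lin l) = lin (l ᵥ* M) := by
  simp only [lin, compM_add, compM_mul, compM_C, compM_X, vecMul, dotProduct, Fin.sum_univ_three,
    C_add, C_mul]
  ring

variable {M N p q}

lemma compM_dvd (h : p ∣ q) : compM M p ∣ compM M q := map_dvd (aeval _) h

lemma compM_isUnit (h : IsUnit p) : IsUnit (compM M p) := h.map (aeval _)

lemma lin_isHomogeneous (l : Fin 3 → ℂ) : (lin l).IsHomogeneous 1 :=
  ((isHomogeneous_C_mul_X _ _).add (isHomogeneous_C_mul_X _ _)).add (isHomogeneous_C_mul_X _ _)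

lemma compM_isHomogeneous {n : ℕ} (h : p.IsHomogeneous n) : (compM M p).IsHomogeneous n :=
  one_mul n ▸ h.aeval _ fun _ => IsHomogeneous.sum _ _ _ fun _ _ => isHomogeneous_C_mul_X _ _

end Pullback

/-- The pullback `M*ω` of a 1-form `ω` given by its vector of coefficients. -/
def pullForm (M : Matrix (Fin 3) (Fin 3) ℂ) (ω : Fin 3 → P3) : Fin 3 → P3 :=
  pullbackM M (ω 0) (ω 1) (ω 2)

section Pull

variable {M N : Matrix (Fin 3) (Fin 3) ℂ} {ω : Fin 3 → P3} {d : ℕ}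

lemma pullForm_apply (i : Fin 3) : pullForm M ω i = ∑ j, C (M j i) * compM M (ω j) := by
  rw [Fin.sum_univ_three]
  rfl

lemma pullForm_pullForm : pullForm N (pullForm M ω) = pullForm (M * N) ω := by
  ext1 i
  simp only [pullForm_apply, Fin.sum_univ_three, compM_add, compM_mul, compM_C, compM_compM,
    mul_apply, C_add, C_mul]
  ring

lemma pullForm_one : pullForm 1 ω = ω := by
  ext1 i
  simp only [pullForm_apply, compM_one, one_apply, apply_ite C, C_1, C_0, ite_mul, one_mul,
    zero_mul, Finset.sum_ite_eq', Finset.mem_univ, if_true]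

lemma dvd_compM_of_dvd_pullForm (hM : M.det ≠ 0) {p : P3} (h : ∀ i, p ∣ pullForm M ω i)
    (k : Fin 3) : compM M⁻¹ p ∣ ω k := by
  have hdvd : ∀ i, compM M⁻¹ p ∣ pullForm M⁻¹ (pullForm M ω) i := fun i => by
    rw [pullForm_apply]
    exact Finset.dvd_sum fun j _ => (compM_dvd (h j)).mul_left _
  simpa only [pullForm_pullForm, mul_nonsing_inv M hM.isUnit, pullForm_one] using hdvd k

lemma IsFoliation.pull (h : IsFoliation d (ω 0) (ω 1) (ω 2)) (hM : M.det ≠ 0) :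
    IsFoliation d (pullForm M ω 0) (pullForm M ω 1) (pullForm M ω 2) := by
  obtain ⟨h0, h1, h2, hcop, heuler⟩ := h
  have hhom : ∀ i, (pullForm M ω i).IsHomogeneous (d + 1) := fun i =>
    (((compM_isHomogeneous h0).C_mul _).add ((compM_isHomogeneous h1).C_mul _)).add
      ((compM_isHomogeneous h2).C_mul _)
  refine ⟨hhom 0, hhom 1, hhom 2, fun p hp0 hp1 hp2 => ?_, ?_⟩
  · have hp : ∀ i, p ∣ pullForm M ω i :=
      Fin.forall_fin_succ.2 ⟨hp0, Fin.forall_fin_two.2 ⟨hp1, hp2⟩⟩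
    have hunit := hcop _ (dvd_compM_of_dvd_pullForm hM hp 0) (dvd_compM_of_dvd_pullForm hM hp 1)
      (dvd_compM_of_dvd_pullForm hM hp 2)
    simpa only [compM_compM, nonsing_inv_mul M hM.isUnit, compM_one]
      using compM_isUnit (M := M) hunit
  · have heuler' := congrArg (compM M) heuler
    rw [← C_0, compM_C, C_0] at heuler'
    simp only [compM_add, compM_mul, compM_X, lin] at heuler'
    simp only [pullForm_apply, Fin.sum_univ_three]
    linear_combination heuler'

lemma invLine_iff {l : Fin 3 → ℂ} :
    InvLine (ω 0) (ω 1) (ω 2) l ↔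
      l ≠ 0 ∧ ∀ i j, lin l ∣ C (l j) * ω i - C (l i) * ω j := by
  refine and_congr_right fun _ => ⟨fun ⟨h01, h02, h12⟩ => ?_, fun h => ⟨h 0 1, h 0 2, h 1 2⟩⟩
  have hswap : ∀ i j, lin l ∣ C (l j) * ω i - C (l i) * ω j →
      lin l ∣ C (l i) * ω j - C (l j) * ω i := fun i j h => by rwa [← dvd_neg, neg_sub]
  simp only [Fin.forall_fin_succ, Fin.forall_fin_zero, sub_self, dvd_zero]
  exact ⟨⟨trivial, h01, h02, trivial⟩, ⟨hswap _ _ h01, trivial, h12, trivial⟩,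
    ⟨hswap _ _ h02, hswap _ _ h12, trivial, trivial⟩, trivial⟩

lemma vecMul_ne_zero (hM : M.det ≠ 0) {l : Fin 3 → ℂ} (hl : l ≠ 0) : l ᵥ* M ≠ 0 :=
  fun h => hM (exists_vecMul_eq_zero_iff.1 ⟨l, hl, h⟩)

lemma InvLine.pull {l : Fin 3 → ℂ} (h : InvLine (ω 0) (ω 1) (ω 2) l) (hM : M.det ≠ 0) :
    InvLine (pullForm M ω 0) (pullForm M ω 1) (pullForm M ω 2) (l ᵥ* M) := by
  obtain ⟨hl, hdvd⟩ := invLine_iff.1 h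
  refine invLine_iff.2 ⟨vecMul_ne_zero hM hl, fun i j => ?_⟩
  have hsum : C ((l ᵥ* M) j) * pullForm M ω i - C ((l ᵥ* M) i) * pullForm M ω j =
      ∑ m, ∑ n, C (M m i * M n j) * compM M (C (l n) * ω m - C (l m) * ω n) := by
    simp only [vecMul, dotProduct, pullForm_apply, Fin.sum_univ_three, compM_sub, compM_mul,
      compM_C, C_add, C_mul]
    ring
  rw [hsum]
  exact Finset.dvd_sum fun m _ => Finset.dvd_sum fun n _ =>
    ((compM_lin M l ▸ compM_dvd (hdvd m n)).mul_left _)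

lemma lin_smul (t : ℂ) (l : Fin 3 → ℂ) : lin (t • l) = C t * lin l := by
  simp only [lin, Pi.smul_apply, smul_eq_mul, C_mul]
  ring

lemma InvLine.smul {a b c : P3} {l : Fin 3 → ℂ} (h : InvLine a b c l) {t : ℂ} (ht : t ≠ 0) :
    InvLine a b c (t • l) := by
  have hdvd : ∀ {u v : ℂ} {p q : P3}, lin l ∣ C u * p - C v * q →
      lin (t • l) ∣ C (t * u) * p - C (t * v) * q := fun {u v p q} h => by
    rw [lin_smul, C_mul, C_mul, mul_assoc, mul_assoc, ← mul_sub]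
    exact mul_dvd_mul_left _ h
  exact ⟨smul_ne_zero ht h.1, hdvd h.2.1, hdvd h.2.2.1, hdvd h.2.2.2⟩

lemma LinConj3.of_pull {a' b' c' : P3} (hM : M.det ≠ 0)
    (h : LinConj3 (pullForm M ω 0) (pullForm M ω 1) (pullForm M ω 2) a' b' c') :
    LinConj3 (ω 0) (ω 1) (ω 2) a' b' c' := by
  obtain ⟨N, hN, t, ht, h⟩ := h
  exact ⟨M * N, by rw [det_mul]; exact mul_ne_zero hM hN, t, ht, by
    simpa only [← pullForm.eq_def, pullForm_pullForm] using h⟩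

end Pull

/-- `L` is a family of pairwise distinct lines, given by linear forms, all invariant by the
foliation of degree `d` defined by `ω`. -/
structure InvArrangement {ι : Type*} (d : ℕ) (ω : Fin 3 → P3) (L : ι → Fin 3 → ℂ) : Prop where
  isFoliation : IsFoliation d (ω 0) (ω 1) (ω 2)
  invLine : ∀ i, InvLine (ω 0) (ω 1) (ω 2) (L i)
  ne_smul : ∀ i j, i ≠ j → ∀ t : ℂ, L i ≠ t • L j

lemma InvArrangement.pull {ι : Type*} {d : ℕ} {ω : Fin 3 → P3} {L : ι → Fin 3 → ℂ}
    (h : InvArrangement d ω L) {M : Matrix (Fin 3) (Fin 3) ℂ} (hM : M.det ≠ 0) :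
    InvArrangement d (pullForm M ω) fun i => L i ᵥ* M where
  isFoliation := h.isFoliation.pull hM
  invLine i := (h.invLine i).pull hM
  ne_smul i j hij t heq := by
    rw [← smul_vecMul] at heq
    exact h.ne_smul i j hij t
      (vecMul_injective_of_isUnit ((isUnit_iff_isUnit_det M).2 hM.isUnit) heq)

/-! ### Foliations leaving the line at infinity invariant -/

lemma isHomogeneous_of_mul_left {σ R : Type*} [CommRing R] [IsDomain R] {p q : MvPolynomial σ R}
    {m n : ℕ} (hp : p.IsHomogeneous m) (hp0 : p ≠ 0) (hpq : (p * q).IsHomogeneous (m + n)) :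
    q.IsHomogeneous n := by
  let := gradedAlgebra (σ := σ) (R := R)
  have hcomp : ∀ (f : MvPolynomial σ R) i,
      (DirectSum.decompose (homogeneousSubmodule σ R) f i : MvPolynomial σ R) =
        homogeneousComponent i f := decomposition.decompose'_apply
  have hmul := DirectSum.coe_decompose_mul_add_of_left_mem (homogeneousSubmodule σ R) (b := q)
    (j := n) ((mem_homogeneousSubmodule m p).2 hp)
  rw [hcomp, hcomp, homogeneousComponent_eq_self hpq] at hmul
  exact mul_left_cancel₀ hp0 hmul ▸ homogeneousComponent_isHomogeneous n q

section Lin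

variable {l : Fin 3 → ℂ}

lemma lin_ne_zero (hl : l ≠ 0) : lin l ≠ 0 := fun h => hl <| by
  have hdot : ∀ v : Fin 3 → ℂ, l ⬝ᵥ v = 0 := fun v => by
    simpa only [lin, map_add, map_mul, eval_C, eval_X, map_zero, dotProduct, Fin.sum_univ_three]
      using congrArg (eval v) h
  exact dotProduct_eq_zero l hdot

lemma lin_prime (hl : l ≠ 0) : Prime (lin l) := by
  refine (irreducible_of_totalDegree_eq_one ((lin_isHomogeneous l).totalDegree (lin_ne_zero hl))
    fun x hx => isUnit_iff_ne_zero.2 ?_).prime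
  rintro rfl
  obtain ⟨m, hm⟩ := ne_zero_iff.1 (lin_ne_zero hl)
  exact hm (zero_dvd_iff.1 (hx m))

lemma not_lin_dvd_X_two (hl : l 0 ≠ 0 ∨ l 1 ≠ 0) : ¬ lin l ∣ X 2 := by
  have heval : ∀ x y : ℂ, l 0 * x + l 1 * y + l 2 = 0 → ¬ lin l ∣ X 2 := fun x y hxy h => by
    have hdvd := map_dvd (eval ![x, y, 1]) h
    simp only [lin, map_add, map_mul, eval_C, eval_X, cons_val, mul_one, hxy] at hdvd
    exact one_ne_zero (zero_dvd_iff.1 hdvd)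
  rcases hl with h0 | h1
  · exact heval (-l 2 / l 0) 0 (by field_simp; ring)
  · exact heval 0 (-l 2 / l 1) (by field_simp; ring)

end Lin

/-- The 1-form `z(A dx + B dy) - (xA + yB) dz`, i.e. the homogenization of the affine 1-form
`A dx + B dy`: the general form satisfying the Euler condition and leaving the line at infinity
`z = 0` invariant. -/
def affineForm (A B : P3) : Fin 3 → P3 :=
  ![X 2 * A, X 2 * B, -(X 0 * A + X 1 * B)]

section AffineForm

variable {d : ℕ} {ω : Fin 3 → P3} {A B : P3} {l : Fin 3 → ℂ}

lemma exists_eq_affineForm (h : IsFoliation d (ω 0) (ω 1) (ω 2))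
    (hz : InvLine (ω 0) (ω 1) (ω 2) ![0, 0, 1]) : ∃ A B, ω = affineForm A B := by
  have hdvd := (invLine_iff.1 hz).2
  have hX : lin ![0, 0, 1] = X 2 := by simp [lin]
  obtain ⟨A, hA⟩ : X 2 ∣ ω 0 := by simpa [hX] using hdvd 0 2
  obtain ⟨B, hB⟩ : X 2 ∣ ω 1 := by simpa [hX] using hdvd 1 2
  have hC : ω 2 = -(X 0 * A + X 1 * B) := mul_left_cancel₀ (X_ne_zero (2 : Fin 3)) <| by
    have heuler := h.2.2.2.2
    rw [hA, hB] at heuler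
    linear_combination heuler
  exact ⟨A, B, funext (Fin.forall_fin_succ.2 ⟨hA, Fin.forall_fin_two.2 ⟨hB, hC⟩⟩)⟩

lemma isHomogeneous_of_X_two_mul (h : (X 2 * A).IsHomogeneous (d + 1)) : A.IsHomogeneous d :=
  isHomogeneous_of_mul_left (isHomogeneous_X ℂ (2 : Fin 3)) (X_ne_zero 2) (add_comm d 1 ▸ h)

lemma affineForm_isHomogeneous_left
    (h : IsFoliation d (affineForm A B 0) (affineForm A B 1) (affineForm A B 2)) :
    A.IsHomogeneous d :=
  isHomogeneous_of_X_two_mul h.1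

lemma affineForm_isHomogeneous_right
    (h : IsFoliation d (affineForm A B 0) (affineForm A B 1) (affineForm A B 2)) :
    B.IsHomogeneous d :=
  isHomogeneous_of_X_two_mul h.2.1

lemma not_X_two_dvd_of_isFoliation
    (h : IsFoliation d (affineForm A B 0) (affineForm A B 1) (affineForm A B 2)) :
    ¬ X 2 ∣ X 0 * A + X 1 * B := fun hdvd =>
  X_prime.not_isUnit (h.2.2.2.1 _ (dvd_mul_right (X 2) A) (dvd_mul_right (X 2) B) hdvd.neg_right)

lemma C_mul_add_ne_zero_of_isFoliation
    (h : IsFoliation d (affineForm A B 0) (affineForm A B 1) (affineForm A B 2))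
    (hd : d ≠ 0) (r : ℂ) : C r * A + B ≠ 0 := fun h0 => by
  obtain rfl : B = -(C r * A) := by linear_combination h0
  have hunit := h.2.2.2.1 A (dvd_mul_left A (X 2)) ⟨-(X 2 * C r), by simp [affineForm]; ring⟩
    ⟨-(X 0 - X 1 * C r), by simp [affineForm]; ring⟩
  have hdeg := (isUnit_iff_totalDegree_of_isReduced.1 hunit).2
  exact hd (hdeg ▸ (affineForm_isHomogeneous_left h).totalDegree hunit.ne_zero).symm

lemma lin_dvd_of_invLine (hl : InvLine (affineForm A B 0) (affineForm A B 1) (affineForm A B 2) l)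
    (hl01 : l 0 ≠ 0 ∨ l 1 ≠ 0) : lin l ∣ C (l 1) * A - C (l 0) * B := by
  have hdvd : lin l ∣ X 2 * (C (l 1) * A - C (l 0) * B) := by
    convert hl.2.1 using 1
    simp only [affineForm, cons_val_zero, cons_val_one]
    ring
  exact ((lin_prime hl.1).dvd_or_dvd hdvd).resolve_left (not_lin_dvd_X_two hl01)

lemma prod_lin_dvd_of_invLine {κ : Type*} {K : Finset κ} {e : κ → ℂ} {u v : ℂ}
    (he : Set.InjOn e K) (huv : u ≠ 0 ∨ v ≠ 0)
    (hK : ∀ k ∈ K, InvLine (affineForm A B 0) (affineForm A B 1) (affineForm A B 2)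
      ![u, v, -e k]) :
    ∏ k ∈ K, lin ![u, v, -e k] ∣ C v * A - C u * B := by
  refine Finset.prod_dvd_of_isRelPrime (fun i hi j hj hij => ?_)
    fun k hk => lin_dvd_of_invLine (hK k hk) huv
  refine ((lin_prime (hK i hi).1).irreducible.isRelPrime_iff_not_dvd).2 fun hdvd => ?_
  have hne : e i - e j ≠ 0 := sub_ne_zero.2 fun heq => hij (he hi hj heq)
  have hsub : lin ![u, v, -e i] ∣ C (e i - e j) * X 2 := by
    convert dvd_sub hdvd dvd_rfl using 1
    simp only [lin, cons_val, C_sub, C_neg]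
    ring
  exact not_lin_dvd_X_two huv <|
    ((hne.isUnit.map C).dvd_mul_left).1 hsub

end AffineForm

/-! ### Counting slopes with a Wronskian -/

section Univariate

open Polynomial (wronskian derivative)
open scoped Polynomial

variable {K : Type*} [Field K] {f g : K[X]} {n : ℕ} {R : Finset K} {k : K → ℕ}

lemma sum_le_natDegree_of_pow_dvd {P : K[X]} (hP : P ≠ 0)
    (h : ∀ r ∈ R, (Polynomial.X - Polynomial.C r) ^ k r ∣ P) : ∑ r ∈ R, k r ≤ P.natDegree := by
  have hdvd : ∏ r ∈ R, (Polynomial.X - Polynomial.C r) ^ k r ∣ P := Finset.prod_dvd_of_coprime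
    (fun _ _ _ _ hrs => (Polynomial.pairwise_coprime_X_sub_C Function.injective_id hrs).pow) h
  have hdeg := Polynomial.natDegree_le_of_dvd hdvd hP
  rw [Polynomial.natDegree_prod_of_monic _ _ fun r _ => (Polynomial.monic_X_sub_C r).pow _] at hdeg
  simpa only [Polynomial.natDegree_pow, Polynomial.natDegree_X_sub_C, mul_one] using hdeg

lemma natDegree_X_mul_add_le (hf : f.natDegree ≤ n) (hg : g.natDegree ≤ n) :
    (Polynomial.X * f + g).natDegree ≤ n + 1 := by
  compute_degree
  omega

lemma natDegree_wronskian_add_two_le (hf : f.natDegree ≤ n) (hg : g.natDegree ≤ n)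
    (hw : wronskian f g ≠ 0) : (wronskian f g).natDegree + 2 ≤ 2 * n := by
  by_cases hfn : f.coeff n = 0
  · have hlt := Polynomial.natDegree_wronskian_lt_add hw
    have hf' : f.natDegree ≠ n := fun h => hw <| by
      have hf0 : f = 0 := Polynomial.leadingCoeff_eq_zero.1 (by rwa [Polynomial.leadingCoeff, h])
      rw [hf0, Polynomial.wronskian_zero_left]
    omega
  set g' := g - Polynomial.C (g.coeff n / f.coeff n) * f with hg'
  have hwg' : wronskian f g = wronskian f g' := by
    simp only [hg', wronskian, map_sub, Polynomial.derivative_C_mul]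
    ring
  have hcoeff : g'.coeff n = 0 := by
    rw [hg', Polynomial.coeff_sub, Polynomial.coeff_C_mul, div_mul_cancel₀ _ hfn, sub_self]
  have hdeg : g'.natDegree ≤ n :=
    Polynomial.natDegree_sub_le_of_le hg ((Polynomial.natDegree_C_mul_le _ _).trans hf) |>.trans
      (max_self n).le
  rw [hwg'] at hw ⊢
  have hlt := Polynomial.natDegree_wronskian_lt_add hw
  have hne : g'.natDegree ≠ n := fun h => hw <| by
    have hg0 : g' = 0 := Polynomial.leadingCoeff_eq_zero.1 (by rwa [Polynomial.leadingCoeff, h])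
    rw [hg0, Polynomial.wronskian_zero_right]
  omega

lemma pow_sub_one_dvd_wronskian {r : K} {m : ℕ}
    (h : (Polynomial.X - Polynomial.C r) ^ m ∣ Polynomial.C r * f + g) :
    (Polynomial.X - Polynomial.C r) ^ (m - 1) ∣ wronskian f g := by
  have hw : wronskian f g =
      f * derivative (Polynomial.C r * f + g) - derivative f * (Polynomial.C r * f + g) := by
    simp only [wronskian, map_add, Polynomial.derivative_C_mul]
    ring
  rw [hw]
  exact dvd_sub ((Polynomial.pow_sub_one_dvd_derivative_of_pow_dvd h).mul_left _)
    (((pow_dvd_pow _ m.pred_le).trans h).mul_left _)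

variable [CharZero K]

lemma exists_C_mul_of_wronskian_eq_zero (hw : wronskian f g = 0) :
    ∃ (u v : K) (h : K[X]), f = Polynomial.C u * h ∧ g = Polynomial.C v * h := by
  rcases eq_or_ne f 0 with rfl | hf
  · exact ⟨0, 1, g, by simp, by simp⟩
  obtain ⟨a, b, h, hab, rfl, rfl⟩ := UniqueFactorizationMonoid.exists_reduced_factors f hf g
  have hh : h ≠ 0 := left_ne_zero_of_mul hf
  have hw' : h ^ 2 * wronskian a b = 0 := by
    rw [← hw]
    simp only [wronskian, Polynomial.derivative_mul]
    ring
  obtain ⟨ha, hb⟩ := hab.isCoprime.wronskian_eq_zero_iff.1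
    ((mul_eq_zero.1 hw').resolve_left (pow_ne_zero 2 hh))
  refine ⟨a.coeff 0, b.coeff 0, h, ?_, ?_⟩
  · rw [← Polynomial.eq_C_of_derivative_eq_zero ha, mul_comm]
  · rw [← Polynomial.eq_C_of_derivative_eq_zero hb, mul_comm]

lemma sum_le_two_mul_of_wronskian_eq_zero (hf : f.natDegree ≤ n) (hg : g.natDegree ≤ n)
    (hT : Polynomial.X * f + g ≠ 0) (hkn : ∀ r ∈ R, k r ≤ n)
    (hdvd : ∀ r ∈ R, (Polynomial.X - Polynomial.C r) ^ k r ∣ Polynomial.C r * f + g)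
    (hw : wronskian f g = 0) : ∑ r ∈ R, k r ≤ 2 * n := by
  classical
  obtain ⟨u, v, h, rfl, rfl⟩ := exists_C_mul_of_wronskian_eq_zero hw
  have hh : h ≠ 0 := by
    rintro rfl
    simp at hT
  have huv : u ≠ 0 ∨ v ≠ 0 := by
    by_contra! huv
    simp [huv] at hT
  have hdeg : h.natDegree ≤ n := by
    rcases huv with hu | hv
    · rwa [Polynomial.natDegree_C_mul hu] at hf
    · rwa [Polynomial.natDegree_C_mul hv] at hg
  have hgeneric : ∑ r ∈ R with ¬ r * u + v = 0, k r ≤ n := by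
    refine (sum_le_natDegree_of_pow_dvd hh fun r hr => ?_).trans hdeg
    obtain ⟨hrR, hr⟩ := Finset.mem_filter.1 hr
    refine (Polynomial.dvd_C_mul hr).1 ?_
    convert hdvd r hrR using 1
    simp only [map_add, map_mul]
    ring
  have hspecial : ∑ r ∈ R with r * u + v = 0, k r ≤ n := by
    have hcard : (R.filter fun r => r * u + v = 0).card ≤ 1 := by
      refine Finset.card_le_one.2 fun r hr s hs => ?_
      have hr := (Finset.mem_filter.1 hr).2
      have hs := (Finset.mem_filter.1 hs).2
      have hu : u ≠ 0 := by
        rintro rfl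
        simp_all
      exact mul_right_cancel₀ hu (by linear_combination hr - hs)
    calc ∑ r ∈ R with r * u + v = 0, k r
        ≤ (R.filter fun r => r * u + v = 0).card • n :=
          Finset.sum_le_card_nsmul _ _ _ fun r hr => hkn r (Finset.mem_filter.1 hr).1
      _ ≤ 1 • n := Nat.mul_le_mul_right n hcard
      _ = n := one_nsmul n
  have hsplit := Finset.sum_filter_add_sum_filter_not R (fun r => r * u + v = 0) k
  omega

lemma card_slopes_eq (hf : f.natDegree ≤ n) (hg : g.natDegree ≤ n) (hn : 2 ≤ n)
    (hT : Polynomial.X * f + g ≠ 0) (hk : ∀ r ∈ R, k r ≠ 0) (hkn : ∀ r ∈ R, k r ≤ n)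
    (hdvd : ∀ r ∈ R, (Polynomial.X - Polynomial.C r) ^ k r ∣ Polynomial.C r * f + g)
    (hsum : ∑ r ∈ R, k r + 1 = 3 * n) :
    R.card = n + 1 := by
  have hle : R.card ≤ n + 1 := by
    refine (Polynomial.card_le_degree_of_subset_roots fun r hr => ?_).trans
      (natDegree_X_mul_add_le hf hg)
    have hroot := (dvd_pow_self _ (hk r hr)).trans (hdvd r hr)
    rw [Polynomial.dvd_iff_isRoot, Polynomial.IsRoot.def] at hroot
    simpa [hT] using hroot
  have hw : wronskian f g ≠ 0 := fun hw => by
    have := sum_le_two_mul_of_wronskian_eq_zero hf hg hT hkn hdvd hw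
    omega
  have hsub : ∑ r ∈ R, (k r - 1) ≤ (wronskian f g).natDegree :=
    sum_le_natDegree_of_pow_dvd hw fun r hr => pow_sub_one_dvd_wronskian (hdvd r hr)
  have hcard : ∑ r ∈ R, (k r - 1) + R.card = ∑ r ∈ R, k r := by
    rw [Finset.card_eq_sum_ones, ← Finset.sum_add_distrib]
    exact Finset.sum_congr rfl fun r hr => Nat.sub_add_cancel (Nat.pos_of_ne_zero (hk r hr))
  have hdeg := natDegree_wronskian_add_two_le hf hg hw
  omega

end Univariate

/-! ### The Camacho–Sad formula for the line at infinity -/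

section Residues

open Polynomial (eval derivative)
open scoped Polynomial

variable {K : Type*} [Field K] {f g : K[X]} {n : ℕ} {R : Finset K} {k : K → ℕ} {r : K}

lemma X_mul_add_eq_C_mul_nodal (hf : f.natDegree ≤ n) (hg : g.natDegree ≤ n)
    (hT : Polynomial.X * f + g ≠ 0) (hR : R.card = n + 1)
    (hroot : ∀ r ∈ R, eval r (Polynomial.X * f + g) = 0) :
    f.coeff n ≠ 0 ∧ Polynomial.X * f + g = Polynomial.C (f.coeff n) * Lagrange.nodal R id := by
  have hdvd : Lagrange.nodal R id ∣ Polynomial.X * f + g := Finset.prod_dvd_of_coprime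
    (fun _ _ _ _ h => Polynomial.pairwise_coprime_X_sub_C Function.injective_id h)
    fun r hr => Polynomial.dvd_iff_isRoot.2 (hroot r hr)
  have hnodal : (Lagrange.nodal R (id : K → K)).natDegree = n + 1 := by
    rw [Lagrange.natDegree_nodal, hR]
  have heq := Polynomial.eq_leadingCoeff_mul_of_monic_of_dvd_of_natDegree_le
    Lagrange.nodal_monic hdvd (hnodal ▸ natDegree_X_mul_add_le hf hg)
  have hlead : (Polynomial.X * f + g).leadingCoeff = f.coeff n := by
    have hcoeff := congrArg (Polynomial.coeff · (n + 1)) heq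
    simp only [Polynomial.coeff_add, Polynomial.coeff_X_mul, Polynomial.coeff_C_mul,
      Polynomial.coeff_eq_zero_of_natDegree_lt (Nat.lt_succ_of_le hg), add_zero] at hcoeff
    rw [hcoeff, ← hnodal, Lagrange.nodal_monic.coeff_natDegree, mul_one]
  exact ⟨hlead ▸ Polynomial.leadingCoeff_ne_zero.2 hT, hlead ▸ heq⟩

lemma sum_residue_eq_one (hf : f.natDegree ≤ n) (hg : g.natDegree ≤ n)
    (hT : Polynomial.X * f + g ≠ 0) (hR : R.card = n + 1)
    (hroot : ∀ r ∈ R, eval r (Polynomial.X * f + g) = 0) :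
    (∀ r ∈ R, eval r (derivative (Polynomial.X * f + g)) ≠ 0) ∧
      ∑ r ∈ R, eval r f / eval r (derivative (Polynomial.X * f + g)) = 1 := by
  classical
  obtain ⟨hc, heq⟩ := X_mul_add_eq_C_mul_nodal hf hg hT hR hroot
  have hder : ∀ r ∈ R, eval r (derivative (Polynomial.X * f + g)) =
      f.coeff n * ∏ s ∈ R.erase r, (r - s) := fun r hr => by
    rw [heq, Polynomial.derivative_C_mul, Polynomial.eval_C_mul]
    exact congrArg _
      ((Lagrange.eval_nodal_derivative_eval_node_eq (v := id) hr).trans Lagrange.eval_nodal)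
  refine ⟨fun r hr => ?_, ?_⟩
  · rw [hder r hr]
    exact mul_ne_zero hc (Finset.prod_ne_zero_iff.2 fun s hs =>
      sub_ne_zero.2 (Finset.ne_of_mem_erase hs).symm)
  · have hdeg : f.degree < R.card := by
      rw [hR]
      exact Polynomial.degree_le_natDegree.trans_lt (WithBot.coe_lt_coe.2 (Nat.lt_succ_of_le hf))
    have hsum := Lagrange.coeff_eq_sum (Set.injOn_id (R : Set K)) hdeg
    rw [hR, Nat.add_sub_cancel] at hsum
    calc ∑ r ∈ R, eval r f / eval r (derivative (Polynomial.X * f + g))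
        = (∑ r ∈ R, eval r f / ∏ s ∈ R.erase r, (r - s)) / f.coeff n := by
          rw [Finset.sum_div]
          exact Finset.sum_congr rfl fun r hr => by rw [hder r hr, div_div, mul_comm]
      _ = 1 := by
          rw [div_eq_one_iff_eq hc]
          exact hsum.symm

lemma eval_derivative_eq_of_sq_dvd
    (h : (Polynomial.X - Polynomial.C r) ^ 2 ∣ Polynomial.C r * f + g) :
    eval r (derivative (Polynomial.X * f + g)) = eval r f := by
  have hroot : (derivative (Polynomial.C r * f + g)).IsRoot r := Polynomial.dvd_iff_isRoot.1 <| by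
    simpa only [Nat.add_one_sub_one, pow_one]
      using Polynomial.pow_sub_one_dvd_derivative_of_pow_dvd h
  have hsplit : Polynomial.X * f + g =
      (Polynomial.X - Polynomial.C r) * f + (Polynomial.C r * f + g) := by ring
  rw [hsplit, map_add, Polynomial.eval_add, hroot.eq_zero, Polynomial.derivative_mul]
  simp

lemma eval_eq_one_sub_mul (hf : f.natDegree ≤ n) (hg : g.natDegree ≤ n)
    (hT : Polynomial.X * f + g ≠ 0) (hR : R.card = n + 1)
    (hroot : ∀ r ∈ R, eval r (Polynomial.X * f + g) = 0) (hr : r ∈ R)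
    (hsq : ∀ s ∈ R, s ≠ r → (Polynomial.X - Polynomial.C s) ^ 2 ∣ Polynomial.C s * f + g) :
    eval r f = (1 - n) * eval r (derivative (Polynomial.X * f + g)) := by
  classical
  obtain ⟨hder, hsum⟩ := sum_residue_eq_one hf hg hT hR hroot
  have hone : ∀ s ∈ R.erase r, eval s f / eval s (derivative (Polynomial.X * f + g)) = 1 :=
    fun s hs => by
      obtain ⟨hsr, hs⟩ := Finset.mem_erase.1 hs
      rw [← eval_derivative_eq_of_sq_dvd (hsq s hs hsr), div_self (hder s hs)]
  rw [← Finset.add_sum_erase R _ hr, Finset.sum_congr rfl hone, Finset.sum_const,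
    Finset.card_erase_of_mem hr, hR, Nat.add_sub_cancel, nsmul_one] at hsum
  rw [← eq_sub_of_add_eq hsum, div_mul_cancel₀ _ (hder r hr)]

lemma exists_not_sq_dvd [CharZero K] (hn : n ≠ 0) (hf : f.natDegree ≤ n) (hg : g.natDegree ≤ n)
    (hT : Polynomial.X * f + g ≠ 0) (hR : R.card = n + 1)
    (hroot : ∀ r ∈ R, eval r (Polynomial.X * f + g) = 0) :
    ∃ r ∈ R, ¬ (Polynomial.X - Polynomial.C r) ^ 2 ∣ Polynomial.C r * f + g := by
  by_contra! hsq
  obtain ⟨r, hr⟩ : R.Nonempty := Finset.card_pos.1 (hR ▸ n.succ_pos)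
  have heval := eval_eq_one_sub_mul hf hg hT hR hroot hr fun s hs _ => hsq s hs
  have hder := (sum_residue_eq_one hf hg hT hR hroot).1 r hr
  rw [← eval_derivative_eq_of_sq_dvd (hsq r hr)] at heval
  have hn' : (n : K) = 0 := by simpa using (mul_eq_right₀ hder).1 heval.symm
  exact hn (Nat.cast_eq_zero.1 hn')

end Residues

/-! ### Slopes of an invariant affine arrangement -/

section RestrictInfinity

open scoped Polynomial

/-- The restriction of a form in `x, y, z` to the line at infinity `z = 0`, in the coordinate
`x / y`. -/
def restrictInfinity : P3 →ₐ[ℂ] ℂ[X] := aeval ![Polynomial.X, 1, 0]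

variable {p : P3} {d : ℕ}

lemma eval_restrictInfinity (r : ℂ) (p : P3) :
    (restrictInfinity p).eval r = eval ![r, 1, 0] p := by
  induction p using MvPolynomial.induction_on with
  | C c => simp [restrictInfinity]
  | add p q hp hq => simp only [map_add, Polynomial.eval_add, hp, hq]
  | mul_X p i hp =>
    rw [map_mul, Polynomial.eval_mul, hp, map_mul]
    fin_cases i <;> simp [restrictInfinity]

lemma natDegree_restrictInfinity_le (hp : p.IsHomogeneous d) :
    (restrictInfinity p).natDegree ≤ d := by
  have hcoord : ∀ i, ((![Polynomial.X, 1, 0] : Fin 3 → ℂ[X]) i).natDegree ≤ 1 := by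
    simp [Fin.forall_fin_succ]
  exact mul_one d ▸ aeval_natDegree_le p hp.totalDegree_le _ hcoord

lemma X_two_dvd_of_restrictInfinity_eq_zero (hp : p.IsHomogeneous d)
    (h : restrictInfinity p = 0) : X 2 ∣ p := by
  set q : MvPolynomial (Fin 2) ℂ := aeval ![X 0, X 1, 0] p with hq
  have hqhom : q.IsHomogeneous d := one_mul d ▸ hp.aeval _ (by
    simp [Fin.forall_fin_succ, isHomogeneous_X, isHomogeneous_zero])
  have hrestrict : (aeval ![Polynomial.X, 1] : MvPolynomial (Fin 2) ℂ →ₐ[ℂ] ℂ[X]) q =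
      restrictInfinity p := by
    rw [hq, restrictInfinity, ← AlgHom.comp_apply]
    refine congrArg (fun φ : P3 →ₐ[ℂ] ℂ[X] => φ p) (algHom_ext fun i => ?_)
    fin_cases i <;> simp
  have hq0 : q = 0 := by
    rw [← Polynomial.homogenize_eq_of_isHomogeneous hqhom (hrestrict.trans h),
      Polynomial.homogenize_zero]
  have hmod : Ideal.Quotient.mkₐ ℂ (Ideal.span {(X 2 : P3)}) =
      (aeval ![Ideal.Quotient.mk _ (X 0), Ideal.Quotient.mk _ (X 1)]).comp
        (aeval ![X 0, X 1, 0]) := algHom_ext fun i => by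
    fin_cases i <;> simp
  have hmk := congrArg (fun φ => φ p) hmod
  simp only [AlgHom.comp_apply, ← hq, hq0, map_zero, Ideal.Quotient.mkₐ_eq_mk] at hmk
  exact Ideal.mem_span_singleton.1 (Ideal.Quotient.eq_zero_iff_mem.1 hmk)

end RestrictInfinity

/-- The lines `x = s k * y + t k * z`, for `k ∈ K`, are pairwise distinct and invariant by the
foliation of degree `d` defined by `affineForm A B`. The parameter `s k`, called the slope, is the
coordinate of the intersection with the line at infinity. -/
structure AffineArrangement {κ : Type*} (d : ℕ) (A B : P3) (K : Finset κ) (s t : κ → ℂ) :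
    Prop where
  isFoliation : IsFoliation d (affineForm A B 0) (affineForm A B 1) (affineForm A B 2)
  invLine : ∀ k ∈ K, InvLine (affineForm A B 0) (affineForm A B 1) (affineForm A B 2)
    ![1, -s k, -t k]
  injOn : Set.InjOn (fun k => (s k, t k)) K

namespace AffineArrangement

open scoped Polynomial

variable {κ : Type*} {d : ℕ} {A B : P3} {K : Finset κ} {s t : κ → ℂ}

lemma prod_lin_dvd (h : AffineArrangement d A B K s t) (r : ℂ) :
    ∏ k ∈ K with s k = r, lin ![1, -r, -t k] ∣ C r * A + B := by
  have hdvd := prod_lin_dvd_of_invLine (A := A) (B := B) (K := K.filter (s · = r)) (e := t)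
    (u := 1) (v := -r) (fun i hi j hj hij => ?_) (Or.inl one_ne_zero) fun k hk => ?_
  · rwa [← dvd_neg, C_neg, C_1, neg_sub, one_mul, neg_mul, sub_neg_eq_add, add_comm] at hdvd
  · obtain ⟨hi, his⟩ := Finset.mem_filter.1 hi
    obtain ⟨hj, hjs⟩ := Finset.mem_filter.1 hj
    exact h.injOn hi hj (Prod.ext (his.trans hjs.symm) hij)
  · obtain ⟨hkK, rfl⟩ := Finset.mem_filter.1 hk
    exact h.invLine k hkK

lemma card_slope_le (h : AffineArrangement d A B K s t) (hd : d ≠ 0) (r : ℂ) :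
    (K.filter (s · = r)).card ≤ d := by
  have hdvd := h.prod_lin_dvd r
  have hne := C_mul_add_ne_zero_of_isFoliation h.isFoliation hd r
  have hhom : (∏ k ∈ K with s k = r, lin ![1, -r, -t k]).IsHomogeneous
      (∑ k ∈ K with s k = r, 1) :=
    IsHomogeneous.prod _ _ _ fun k _ => lin_isHomogeneous _
  have hhom' : (C r * A + B).IsHomogeneous d :=
    ((affineForm_isHomogeneous_left h.isFoliation).C_mul r).add
      (affineForm_isHomogeneous_right h.isFoliation)
  rw [Finset.card_eq_sum_ones, ← hhom.totalDegree (ne_zero_of_dvd_ne_zero hne hdvd),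
    ← hhom'.totalDegree hne]
  exact totalDegree_le_of_dvd_of_isDomain hdvd hne

lemma pow_card_slope_dvd (h : AffineArrangement d A B K s t) (r : ℂ) :
    (Polynomial.X - Polynomial.C r) ^ (K.filter (s · = r)).card ∣
      Polynomial.C r * restrictInfinity A + restrictInfinity B := by
  have hdvd := map_dvd restrictInfinity (h.prod_lin_dvd r)
  have hline : ∀ c, restrictInfinity (lin ![1, -r, -c]) = Polynomial.X - Polynomial.C r :=
    fun c => by simp [restrictInfinity, lin, sub_eq_add_neg]
  have hC : restrictInfinity (C r) = Polynomial.C r := algHom_C _ r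
  simpa only [map_prod, hline, Finset.prod_const, map_add, map_mul, hC] using hdvd

lemma restrictInfinity_ne_zero (h : AffineArrangement d A B K s t) :
    Polynomial.X * restrictInfinity A + restrictInfinity B ≠ 0 := fun h0 => by
  refine not_X_two_dvd_of_isFoliation h.isFoliation
    (X_two_dvd_of_restrictInfinity_eq_zero (d := d + 1) ?_ ?_)
  · exact (add_comm 1 d ▸
      (isHomogeneous_X ℂ 0).mul (affineForm_isHomogeneous_left h.isFoliation)).add
      (add_comm 1 d ▸ (isHomogeneous_X ℂ 1).mul (affineForm_isHomogeneous_right h.isFoliation))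
  · simpa [restrictInfinity] using h0

lemma natDegree_restrictInfinity_left (h : AffineArrangement d A B K s t) :
    (restrictInfinity A).natDegree ≤ d :=
  natDegree_restrictInfinity_le (affineForm_isHomogeneous_left h.isFoliation)

lemma natDegree_restrictInfinity_right (h : AffineArrangement d A B K s t) :
    (restrictInfinity B).natDegree ≤ d :=
  natDegree_restrictInfinity_le (affineForm_isHomogeneous_right h.isFoliation)

lemma card_slope_ne_zero {k : κ} (hk : k ∈ K) : (K.filter (s · = s k)).card ≠ 0 :=
  Finset.card_ne_zero_of_mem (Finset.mem_filter.2 ⟨hk, rfl⟩)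

lemma sq_dvd_of_slope_eq (h : AffineArrangement d A B K s t) {j k : κ} (hj : j ∈ K) (hk : k ∈ K)
    (hjk : j ≠ k) (hs : s j = s k) : (Polynomial.X - Polynomial.C (s k)) ^ 2 ∣
      Polynomial.C (s k) * restrictInfinity A + restrictInfinity B := by
  refine (pow_dvd_pow _ ?_).trans (h.pow_card_slope_dvd (s k))
  exact Finset.one_lt_card.2
    ⟨j, Finset.mem_filter.2 ⟨hj, hs⟩, k, Finset.mem_filter.2 ⟨hk, rfl⟩, hjk⟩

lemma card_image_slope (h : AffineArrangement d A B K s t) (hd : 2 ≤ d)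
    (hK : K.card + 1 = 3 * d) : (K.image s).card = d + 1 := by
  refine card_slopes_eq h.natDegree_restrictInfinity_left h.natDegree_restrictInfinity_right hd
    h.restrictInfinity_ne_zero (fun r hr => ?_) (fun r _ => h.card_slope_le (by omega) r)
    (fun r _ => h.pow_card_slope_dvd r) ?_
  · obtain ⟨k, hk, rfl⟩ := Finset.mem_image.1 hr
    exact card_slope_ne_zero hk
  · rw [← hK, Finset.card_eq_sum_card_image s K]

lemma eval_eq_zero_of_mem_image (h : AffineArrangement d A B K s t) {r : ℂ}
    (hr : r ∈ K.image s) :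
    (Polynomial.X * restrictInfinity A + restrictInfinity B).eval r = 0 := by
  obtain ⟨k, hk, rfl⟩ := Finset.mem_image.1 hr
  have hroot := Polynomial.dvd_iff_isRoot.1
    ((dvd_pow_self _ (card_slope_ne_zero hk)).trans (h.pow_card_slope_dvd (s k)))
  simpa using hroot.eq_zero

lemma exists_simple_slope (h : AffineArrangement d A B K s t) (hd : 2 ≤ d)
    (hK : K.card + 1 = 3 * d) : ∃ k ∈ K, ∀ j ∈ K, s j = s k → j = k := by
  obtain ⟨r, hr, hsq⟩ := exists_not_sq_dvd (by omega) h.natDegree_restrictInfinity_left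
    h.natDegree_restrictInfinity_right h.restrictInfinity_ne_zero (h.card_image_slope hd hK)
    fun r hr => h.eval_eq_zero_of_mem_image hr
  obtain ⟨k, hk, rfl⟩ := Finset.mem_image.1 hr
  exact ⟨k, hk, fun j hj hjk => by_contra fun hne => hsq (h.sq_dvd_of_slope_eq hj hk hne hjk)⟩

lemma eval_eq_one_sub_mul (h : AffineArrangement d A B K s t) (hd : 2 ≤ d)
    (hK : K.card + 1 = 3 * d) {k : κ} (hk : k ∈ K)
    (hothers : ∀ j ∈ K, j ≠ k → ∃ i ∈ K, i ≠ j ∧ s i = s j) :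
    let T := (Polynomial.X * restrictInfinity A + restrictInfinity B).derivative.eval (s k)
    T ≠ 0 ∧ eval ![s k, 1, 0] A = (1 - d) * T := by
  have hmem := Finset.mem_image_of_mem s hk
  have hroot : ∀ r ∈ K.image s, _ := fun r hr => h.eval_eq_zero_of_mem_image hr
  refine ⟨(sum_residue_eq_one h.natDegree_restrictInfinity_left h.natDegree_restrictInfinity_right
    h.restrictInfinity_ne_zero (h.card_image_slope hd hK) hroot).1 _ hmem, ?_⟩
  rw [← eval_restrictInfinity]
  refine _root_.eval_eq_one_sub_mul h.natDegree_restrictInfinity_left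
    h.natDegree_restrictInfinity_right h.restrictInfinity_ne_zero (h.card_image_slope hd hK) hroot
    hmem fun r hr hrk => ?_
  obtain ⟨j, hj, rfl⟩ := Finset.mem_image.1 hr
  obtain ⟨i, hi, hij, hs⟩ := hothers j hj (fun hjk => hrk (congrArg s hjk))
  exact h.sq_dvd_of_slope_eq hi hj hij hs

end AffineArrangement

/-! ### Simple crossings -/

section SimpleCrossing

variable {ι : Type*} {L : ι → Fin 3 → ℂ} {i j : ι}

/-- The lines `L i` and `L j` meet in a point which lies on no other line of the arrangement. -/
def SimpleCrossing (L : ι → Fin 3 → ℂ) (i j : ι) : Prop :=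
  i ≠ j ∧ ∀ k, (of ![L i, L j, L k]).det = 0 → k = i ∨ k = j

lemma SimpleCrossing.symm (h : SimpleCrossing L i j) : SimpleCrossing L j i := by
  have hdet : ∀ k, (of ![L j, L i, L k]).det = -(of ![L i, L j, L k]).det := fun k => by
    simp only [det_fin_three, of_apply, cons_val]
    ring
  exact ⟨h.1.symm, fun k hk => (h.2 k (by rwa [hdet, neg_eq_zero] at hk)).symm⟩

lemma simpleCrossing_vecMul_iff {M : Matrix (Fin 3) (Fin 3) ℂ} (hM : M.det ≠ 0) :
    SimpleCrossing (fun k => L k ᵥ* M) i j ↔ SimpleCrossing L i j := by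
  have hdet : ∀ k, (of ![L i ᵥ* M, L j ᵥ* M, L k ᵥ* M]).det = (of ![L i, L j, L k]).det * M.det :=
    fun k => by simp [← det_mul, cons_mul]
  simp only [SimpleCrossing, hdet, mul_eq_zero, hM, or_false]

/-- The lines of `L` in a position adapted to two of them: `L i` is `z = 0`, `L j` is `x = 0`, and
each of them is the only line through a coordinate point different from their intersection. -/
structure CornerPosition (L : ι → Fin 3 → ℂ) (i j : ι) : Prop where
  left_zero : L i 0 = 0
  left_one : L i 1 = 0
  right_one : L j 1 = 0
  right_two : L j 2 = 0
  ne_left : ∀ k, k ≠ i → L k 0 ≠ 0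
  ne_right : ∀ k, k ≠ j → L k 2 ≠ 0

lemma exists_dotProduct_ne_zero [Finite ι] (hL : ∀ i j, i ≠ j → ∀ t : ℂ, L i ≠ t • L j)
    (hi : L i ≠ 0) : ∃ v, L i ⬝ᵥ v = 0 ∧ ∀ k, k ≠ i → L k ⬝ᵥ v ≠ 0 := by
  obtain ⟨v, hv, hne⟩ := Module.Dual.exists_forall_mem_ne_zero_of_forall_exists
    (LinearMap.ker (dotProductEquiv ℂ (Fin 3) (L i)))
    (fun k : {k // k ≠ i} => dotProductEquiv ℂ (Fin 3) (L k)) fun ⟨k, hk⟩ => by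
      have hcross : crossProduct (L i) (L k) ≠ 0 :=
        crossProduct_ne_zero_iff_linearIndependent.2 <|
          (LinearIndependent.pair_iff' hi).2 fun t ht => hL k i hk t ht.symm
      obtain ⟨w, hw⟩ : ∃ w, crossProduct (L i) (L k) ⬝ᵥ w ≠ 0 := by
        by_contra! hw
        exact hcross (dotProduct_eq_zero _ hw)
      refine ⟨crossProduct w (L i), ?_, ?_⟩
      · simp [dot_cross_self]
      · rw [dotProduct_comm, triple_product_permutation, triple_product_permutation] at hw
        simpa using hw
  exact ⟨v, by simpa using hv, fun k hk => by simpa using hne ⟨k, hk⟩⟩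

lemma exists_cornerPosition [Finite ι] (hL : ∀ i j, i ≠ j → ∀ t : ℂ, L i ≠ t • L j)
    (hi : L i ≠ 0) (hj : L j ≠ 0) (hij : i ≠ j) :
    ∃ M : Matrix (Fin 3) (Fin 3) ℂ, M.det ≠ 0 ∧ CornerPosition (fun k => L k ᵥ* M) i j := by
  obtain ⟨u, hiu, hu⟩ := exists_dotProduct_ne_zero hL hi
  obtain ⟨w, hjw, hw⟩ := exists_dotProduct_ne_zero hL hj
  have hcross : crossProduct (L i) (L j) ≠ 0 :=
    crossProduct_ne_zero_iff_linearIndependent.2 <|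
      (LinearIndependent.pair_iff' hi).2 fun t ht => hL j i hij.symm t ht.symm
  have hcol : ∀ k, L k ᵥ* (of ![u, crossProduct (L i) (L j), w])ᵀ =
      ![L k ⬝ᵥ u, L k ⬝ᵥ crossProduct (L i) (L j), L k ⬝ᵥ w] := fun k => by
    ext m
    fin_cases m <;> simp [vecMul, dotProduct]
  refine ⟨(of ![u, crossProduct (L i) (L j), w])ᵀ, fun hdet => ?_, ?_⟩
  · obtain ⟨v, hv, hMv⟩ := exists_mulVec_eq_zero_iff.2 hdet
    have hcomb : ∀ k, (L k ⬝ᵥ u) * v 0 + (L k ⬝ᵥ crossProduct (L i) (L j)) * v 1 +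
        (L k ⬝ᵥ w) * v 2 = 0 := fun k => by
      have h := dotProduct_mulVec (L k) (of ![u, crossProduct (L i) (L j), w])ᵀ v
      rw [hMv, hcol, dotProduct_zero] at h
      simpa [dotProduct, Fin.sum_univ_three] using h.symm
    have hv2 : v 2 = 0 := by simpa [hiu, dot_self_cross, hw i hij] using hcomb i
    have hv0 : v 0 = 0 := by simpa [hjw, dot_cross_self, hu j hij.symm] using hcomb j
    have hv1 : v 1 = 0 := by
      have hzero : v 1 • crossProduct (L i) (L j) = 0 := by
        rw [← hMv]
        ext m
        simp [mulVec, dotProduct, Fin.sum_univ_three, hv0, hv2, mul_comm]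
      exact (smul_eq_zero.1 hzero).resolve_right hcross
    exact hv (funext (Fin.forall_fin_succ.2 ⟨hv0, Fin.forall_fin_two.2 ⟨hv1, hv2⟩⟩))
  · simp only [hcol]
    exact ⟨hiu, dot_self_cross _ _, dot_cross_self _ _, hjw, hu, hw⟩

end SimpleCrossing

section CornerArgument

variable {ι : Type*} {L : ι → Fin 3 → ℂ} {i j k : ι}

/-- The coefficient `s` of the line `L k`, written as `x = s * y + t * z`
(with junk value `0` when `L k` does not involve `x`). -/
def lineSlope (L : ι → Fin 3 → ℂ) (k : ι) : ℂ := -L k 1 / L k 0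

/-- The coefficient `t` of the line `L k`, written as `x = s * y + t * z`
(with junk value `0` when `L k` does not involve `x`). -/
def lineIntercept (L : ι → Fin 3 → ℂ) (k : ι) : ℂ := -L k 2 / L k 0

lemma inv_smul_eq_lineSlope_lineIntercept (h0 : L k 0 ≠ 0) :
    (L k 0)⁻¹ • L k = ![1, -lineSlope L k, -lineIntercept L k] := by
  ext m
  fin_cases m <;> simp [lineSlope, lineIntercept, h0, div_eq_inv_mul]

lemma CornerPosition.lineSlope_right (h : CornerPosition L i j) : lineSlope L j = 0 := by
  rw [lineSlope, h.right_one, neg_zero, zero_div]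

lemma CornerPosition.simpleCrossing_iff (h : CornerPosition L i j) (hij : i ≠ j) (hki : k ≠ i) :
    SimpleCrossing L i k ↔ ∀ m, m ≠ i → lineSlope L m = lineSlope L k → m = k := by
  have hdet : ∀ m, m ≠ i → ((of ![L i, L k, L m]).det = 0 ↔ lineSlope L m = lineSlope L k) :=
    fun m hm => by
      rw [lineSlope, lineSlope, div_eq_div_iff (h.ne_left m hm) (h.ne_left k hki)]
      simp only [det_fin_three, of_apply, cons_val, h.left_zero, h.left_one]
      have h2 := h.ne_right i hij
      constructor
      · intro heq
        exact mul_left_cancel₀ h2 (by linear_combination -heq)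
      · intro heq
        linear_combination (-L i 2) * heq
  constructor
  · intro hs m hm heq
    exact (hs.2 m ((hdet m hm).2 heq)).resolve_left hm
  · refine fun hs => ⟨hki.symm, fun m hm => ?_⟩
    by_cases hmi : m = i
    · exact Or.inl hmi
    · exact Or.inr (hs m hmi ((hdet m hmi).1 hm))

variable {d : ℕ} {ω : Fin 3 → P3}

lemma InvArrangement.exists_affineArrangement [Fintype ι] [DecidableEq ι]
    (h : InvArrangement d ω L) (hL : CornerPosition L i j) (hij : i ≠ j) :
    ∃ A B, ω = affineForm A B ∧
      AffineArrangement d A B (Finset.univ.erase i) (lineSlope L) (lineIntercept L) := by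
  have hinf : (L i 2)⁻¹ • L i = ![0, 0, 1] := by
    ext m
    fin_cases m <;> simp [hL.left_zero, hL.left_one, hL.ne_right i hij]
  obtain ⟨A, B, rfl⟩ := exists_eq_affineForm h.isFoliation
    (hinf ▸ (h.invLine i).smul (inv_ne_zero (hL.ne_right i hij)))
  have hne : ∀ k ∈ (Finset.univ.erase i : Finset ι), L k 0 ≠ 0 := fun k hk =>
    hL.ne_left k (Finset.ne_of_mem_erase hk)
  refine ⟨A, B, rfl, h.isFoliation, fun k hk => ?_, fun k hk m hm heq => ?_⟩
  · rw [← inv_smul_eq_lineSlope_lineIntercept (hne k hk)]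
    exact (h.invLine k).smul (inv_ne_zero (hne k hk))
  · obtain ⟨hs, ht⟩ : lineSlope L k = lineSlope L m ∧ lineIntercept L k = lineIntercept L m :=
      Prod.ext_iff.1 heq
    by_contra hkm
    refine h.ne_smul k m hkm (L k 0 * (L m 0)⁻¹) ?_
    rw [mul_smul, inv_smul_eq_lineSlope_lineIntercept (hne m hm), ← hs, ← ht,
      ← inv_smul_eq_lineSlope_lineIntercept (hne k hk), smul_inv_smul₀ (hne k hk)]

lemma X_zero_dvd_of_invLine (h : InvLine (ω 0) (ω 1) (ω 2) (L j)) (h1 : L j 1 = 0)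
    (h2 : L j 2 = 0) : X 0 ∣ ω 2 := by
  have h0 : L j 0 ≠ 0 := fun h0 =>
    h.1 (funext (Fin.forall_fin_succ.2 ⟨h0, Fin.forall_fin_two.2 ⟨h1, h2⟩⟩))
  have hdvd := (invLine_iff.1 h).2 0 2
  have hlin : lin (L j) = C (L j 0) * X 0 := by simp [lin, h1, h2]
  rw [hlin, h2, C_0, zero_mul, zero_sub, dvd_neg] at hdvd
  exact (mul_dvd_mul_iff_left (C_ne_zero.2 h0)).1 hdvd

/-- The matrix exchanging the coordinates `x` and `z`. -/
def swapXZ : Matrix (Fin 3) (Fin 3) ℂ := !![0, 0, 1; 0, 1, 0; 1, 0, 0]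

lemma vecMul_swapXZ (l : Fin 3 → ℂ) : l ᵥ* swapXZ = ![l 2, l 1, l 0] := by
  ext m
  fin_cases m <;> simp [swapXZ, vecMul, dotProduct, Fin.sum_univ_three]

lemma CornerPosition.swapXZ (h : CornerPosition L i j) :
    CornerPosition (fun k => L k ᵥ* swapXZ) j i := by
  simp only [vecMul_swapXZ]
  exact ⟨h.right_two, h.right_one, h.left_one, h.left_zero, h.ne_right, h.ne_left⟩

lemma card_univ_erase_add_one [Fintype ι] [DecidableEq ι] (i : ι) :
    (Finset.univ.erase i).card + 1 = Fintype.card ι :=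
  Finset.card_erase_add_one (Finset.mem_univ i)

variable [Fintype ι]

lemma InvArrangement.exists_simpleCrossing (h : InvArrangement d ω L) (hd : 2 ≤ d)
    (hι : Fintype.card ι = 3 * d) (i : ι) : ∃ j, SimpleCrossing L i j := by
  classical
  have : Nontrivial ι := Fintype.one_lt_card_iff_nontrivial.1 (by omega)
  obtain ⟨j, hj⟩ := exists_ne i
  obtain ⟨M, hM, hcorner⟩ := exists_cornerPosition h.ne_smul (h.invLine i).1 (h.invLine j).1 hj.symm
  obtain ⟨A, B, -, hAB⟩ := (h.pull hM).exists_affineArrangement hcorner hj.symm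
  obtain ⟨k, hk, hsimple⟩ := hAB.exists_simple_slope hd ((card_univ_erase_add_one i).trans hι)
  refine ⟨k, (simpleCrossing_vecMul_iff hM).1 <|
    (hcorner.simpleCrossing_iff hj.symm (Finset.ne_of_mem_erase hk)).2 fun m hm => hsimple m ?_⟩
  exact Finset.mem_erase.2 ⟨hm, Finset.mem_univ m⟩

lemma InvArrangement.corner_residue (h : InvArrangement d ω L) (hd : 2 ≤ d)
    (hι : Fintype.card ι = 3 * d) (hL : CornerPosition L i j) (hij : i ≠ j)
    (huniq : ∀ k, SimpleCrossing L i k → k = j) {A C' : P3} (hA : ω 0 = X 2 * A)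
    (hC : ω 2 = X 0 * C') :
    eval ![0, 1, 0] C' ≠ 0 ∧ eval ![0, 1, 0] A = (d - 1) * eval ![0, 1, 0] C' := by
  classical
  obtain ⟨A, B, rfl, hAB⟩ := h.exists_affineArrangement hL hij
  obtain rfl := mul_left_cancel₀ (X_ne_zero (2 : Fin 3)) hA
  obtain ⟨hT, hA⟩ := hAB.eval_eq_one_sub_mul hd ((card_univ_erase_add_one i).trans hι)
    (Finset.mem_erase.2 ⟨hij.symm, Finset.mem_univ j⟩) fun k hk hkj => by
      have hki := Finset.ne_of_mem_erase hk
      have hns := mt (hL.simpleCrossing_iff hij hki).2 (mt (huniq k) hkj)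
      push Not at hns
      obtain ⟨m, hm, hs, hmk⟩ := hns
      exact ⟨m, Finset.mem_erase.2 ⟨hm, Finset.mem_univ m⟩, hmk, hs⟩
  have hT' : Polynomial.X * restrictInfinity A + restrictInfinity B =
      -(Polynomial.X * restrictInfinity C') := by
    have hr := congrArg restrictInfinity hC
    have hX : restrictInfinity (X 0) = Polynomial.X ∧ restrictInfinity (X 1) = 1 :=
      ⟨aeval_X _ _, aeval_X _ _⟩
    simpa only [affineForm, cons_val, map_neg, map_add, map_mul, hX, one_mul,
      neg_eq_iff_eq_neg] using hr
  rw [hT', hL.lineSlope_right] at hT hA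
  simp only [Polynomial.derivative_neg, Polynomial.derivative_mul, Polynomial.derivative_X, one_mul,
    Polynomial.eval_neg, Polynomial.eval_add, Polynomial.eval_mul, Polynomial.eval_X, zero_mul,
    add_zero, eval_restrictInfinity] at hT hA
  exact ⟨neg_ne_zero.1 hT, by linear_combination hA⟩

lemma InvArrangement.not_isolated_simpleCrossing (h : InvArrangement d ω L) (hd : 3 ≤ d)
    (hι : Fintype.card ι = 3 * d) (hL : CornerPosition L i j) (hij : i ≠ j) :
    ¬ ((∀ k, SimpleCrossing L i k → k = j) ∧ ∀ k, SimpleCrossing L j k → k = i) := by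
  classical
  rintro ⟨hi, hj⟩
  have hdet : swapXZ.det ≠ 0 := by simp [swapXZ, det_fin_three]
  obtain ⟨A, hA⟩ : X 2 ∣ ω 0 := by
    obtain ⟨A, B, rfl, -⟩ := h.exists_affineArrangement hL hij
    exact dvd_mul_right _ _
  obtain ⟨C', hC⟩ := X_zero_dvd_of_invLine (h.invLine j) hL.right_one hL.right_two
  have hC' : pullForm swapXZ ω 0 = X 2 * compM swapXZ C' := by
    simp [pullForm_apply, Fin.sum_univ_three, hC, swapXZ, lin]
  have hA' : pullForm swapXZ ω 2 = X 0 * compM swapXZ A := by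
    simp [pullForm_apply, Fin.sum_univ_three, hA, swapXZ, lin]
  obtain ⟨hC0, hAC⟩ := h.corner_residue (by omega) hι hL hij hi hA hC
  obtain ⟨-, hCA⟩ := (h.pull hdet).corner_residue (by omega) hι hL.swapXZ hij.symm
    (fun k hk => hj k ((simpleCrossing_vecMul_iff hdet).1 hk)) hC' hA'
  have hfix : swapXZ *ᵥ ![0, 1, 0] = ![0, 1, 0] := by
    ext m
    fin_cases m <;> simp [swapXZ]
  rw [eval_compM, eval_compM, hfix, hAC] at hCA
  have hprod : eval ![0, 1, 0] C' * ((d : ℂ) * (d - 2)) = 0 := by linear_combination -hCA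
  rcases mul_eq_zero.1 ((mul_eq_zero.1 hprod).resolve_left hC0) with h0 | h2
  · exact absurd h0 (Nat.cast_ne_zero.2 (by omega))
  · have : (d : ℂ) = (2 : ℕ) := by simpa using sub_eq_zero.1 h2
    have := Nat.cast_injective this
    omega

lemma InvArrangement.exists_ne_simpleCrossing (h : InvArrangement d ω L) (hd : 3 ≤ d)
    (hι : Fintype.card ι = 3 * d) :
    ∃ i j k, j ≠ k ∧ SimpleCrossing L i j ∧ SimpleCrossing L i k := by
  by_contra! hcon
  obtain ⟨i⟩ : Nonempty ι := Fintype.card_pos_iff.1 (by omega)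
  obtain ⟨j, hij⟩ := h.exists_simpleCrossing (by omega) hι i
  obtain ⟨M, hM, hcorner⟩ :=
    exists_cornerPosition h.ne_smul (h.invLine i).1 (h.invLine j).1 hij.1
  refine (h.pull hM).not_isolated_simpleCrossing hd hι hcorner hij.1
    ⟨fun k hk => ?_, fun k hk => ?_⟩
  · by_contra hne
    exact hcon i k j hne ((simpleCrossing_vecMul_iff hM).1 hk) hij
  · by_contra hne
    exact hcon j k i hne ((simpleCrossing_vecMul_iff hM).1 hk) hij.symm

end CornerArgument

/-! ### Normalising four directions -/

lemma exists_sorted_of_card_eq_three {α : Type*} [DecidableEq α] {S : Finset α}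
    (hS : S.card = 3) (m : α → ℕ) :
    ∃ a b c, a ≠ b ∧ a ≠ c ∧ b ≠ c ∧ S = {a, b, c} ∧ m b ≤ m a ∧ m c ≤ m b := by
  obtain ⟨a, ha, hmax⟩ := S.exists_max_image m (Finset.card_pos.1 (by omega))
  obtain ⟨b, c, hbc, hSa⟩ := Finset.card_eq_two.1 (show (S.erase a).card = 2 by
    rw [Finset.card_erase_of_mem ha, hS])
  wlog hm : m c ≤ m b generalizing b c
  · exact this c b hbc.symm (hSa.trans (Finset.pair_comm b c)) (by omega)
  have hS' : S = {a, b, c} := by rw [← hSa, Finset.insert_erase ha]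
  have hb : b ∈ S.erase a := hSa ▸ Finset.mem_insert_self b {c}
  have hc : c ∈ S.erase a := hSa ▸ Finset.mem_insert_of_mem (Finset.mem_singleton_self c)
  exact ⟨a, b, c, (Finset.ne_of_mem_erase hb).symm, (Finset.ne_of_mem_erase hc).symm, hbc, hS',
    hmax b (Finset.mem_of_mem_erase hb), hm⟩

lemma card_filter_eq_one {α β : Type*} [DecidableEq β] {S : Finset α} {f : α → β} {a : α}
    (ha : a ∈ S) (hf : ∀ b ∈ S, f b = f a → b = a) : (S.filter (f · = f a)).card = 1 :=
  Finset.card_eq_one.2 ⟨a, Finset.eq_singleton_iff_unique_mem.2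
    ⟨Finset.mem_filter.2 ⟨ha, rfl⟩, fun b hb =>
      hf b (Finset.mem_filter.1 hb).1 (Finset.mem_filter.1 hb).2⟩⟩

lemma AffineArrangement.exists_slopes {κ : Type*} {A B : P3} {K : Finset κ} {s t : κ → ℂ}
    (h : AffineArrangement 4 A B K s t) (hK : K.card = 11) {j k : κ} (hj : j ∈ K) (hk : k ∈ K)
    (hjk : j ≠ k) (hjs : ∀ i ∈ K, s i = s j → i = j) (hks : ∀ i ∈ K, s i = s k → i = k) :
    ∃ ρ : Fin 4 → ℂ, Function.Injective ρ ∧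
      ((fun i => (K.filter (s · = ρ i)).card) = ![4, 4, 1, 1] ∨
        (fun i => (K.filter (s · = ρ i)).card) = ![4, 3, 2, 1] ∨
        (fun i => (K.filter (s · = ρ i)).card) = ![3, 3, 3, 1]) := by
  set m : ℂ → ℕ := fun r => (K.filter (s · = r)).card
  have hmj : m (s j) = 1 := card_filter_eq_one hj hjs
  have hsjk : s j ≠ s k := fun heq => hjk (hks j hj heq)
  have hjR := Finset.mem_image_of_mem s hj
  have hkR : s k ∈ (K.image s).erase (s j) :=
    Finset.mem_erase.2 ⟨hsjk.symm, Finset.mem_image_of_mem s hk⟩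
  have hcard := h.card_image_slope (by norm_num) (by omega)
  have hsum : ∑ r ∈ K.image s, m r = 11 := hK ▸ (Finset.card_eq_sum_card_image s K).symm
  rw [← Finset.add_sum_erase _ _ hjR, ← Finset.add_sum_erase _ _ hkR, hmj,
    show m (s k) = 1 from card_filter_eq_one hk hks] at hsum
  obtain ⟨a, b, c, hab, hac, hbc, hS, hmba, hmcb⟩ :=
    exists_sorted_of_card_eq_three (S := ((K.image s).erase (s j)).erase (s k))
      (by rw [Finset.card_erase_of_mem hkR, Finset.card_erase_of_mem hjR, hcard]) m
  have hmem : ∀ r ∈ ({a, b, c} : Finset ℂ), r ≠ s j ∧ m r ≠ 0 ∧ m r ≤ 4 := fun r hr => by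
    rw [← hS] at hr
    obtain ⟨hrj, hrR⟩ := Finset.mem_erase.1 (Finset.mem_of_mem_erase hr)
    obtain ⟨i, hi, rfl⟩ := Finset.mem_image.1 hrR
    exact ⟨hrj, card_slope_ne_zero hi, h.card_slope_le (by norm_num) _⟩
  simp only [Finset.forall_mem_insert, Finset.mem_singleton, forall_eq] at hmem
  obtain ⟨⟨haj, -, ha⟩, ⟨hbj, -, hb⟩, hcj, hc0, -⟩ := hmem
  rw [hS, Finset.sum_insert (by simp [hab, hac]), Finset.sum_pair hbc] at hsum
  refine ⟨![a, b, c, s j], ?_, ?_⟩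
  · simp [Function.Injective, Fin.forall_fin_succ, hab, hac, hbc, haj, hbj, hcj, hab.symm,
      hac.symm, hbc.symm, haj.symm, hbj.symm, hcj.symm]
  · have hvec : (fun i => m (![a, b, c, s j] i)) = ![m a, m b, m c, 1] := by
      ext i
      fin_cases i <;> simp [hmj]
    have hcases : m a = 4 ∧ m b = 4 ∧ m c = 1 ∨ m a = 4 ∧ m b = 3 ∧ m c = 2 ∨
        m a = 3 ∧ m b = 3 ∧ m c = 3 := by omega
    rw [hvec]
    rcases hcases with ⟨ha, hb, hc⟩ | ⟨ha, hb, hc⟩ | ⟨ha, hb, hc⟩ <;> simp [ha, hb, hc]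

/-- The parallel lines `u * x + v * y = e k * z` are pairwise distinct and invariant by the
foliation defined by `affineForm A B`. -/
structure ParallelLines (A B : P3) (u v : ℂ) {n : ℕ} (e : Fin n → ℂ) : Prop where
  injective : Function.Injective e
  invLine : ∀ k, InvLine (affineForm A B 0) (affineForm A B 1) (affineForm A B 2) ![u, v, -e k]

/-- A foliation of degree `d`, given by `affineForm A B`, leaving invariant `n₁` lines `y = e z` and
`n₂` lines `x = e z`, both families being centred at the origin, together with `n₃` lines
`x - y = e z` and `n₄` lines `x - r y = e z`, where `r ≠ 0, 1`. -/
structure NormalArrangement (d : ℕ) (A B : P3) (r : ℂ) {n₁ n₂ n₃ n₄ : ℕ} (e₁ : Fin n₁ → ℂ)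
    (e₂ : Fin n₂ → ℂ) (e₃ : Fin n₃ → ℂ) (e₄ : Fin n₄ → ℂ) : Prop where
  isFoliation : IsFoliation d (affineForm A B 0) (affineForm A B 1) (affineForm A B 2)
  ratio_ne_zero : r ≠ 0
  ratio_ne_one : r ≠ 1
  horizontal : ParallelLines A B 0 1 e₁
  horizontal_sum : ∑ k, e₁ k = 0
  vertical : ParallelLines A B 1 0 e₂
  vertical_sum : ∑ k, e₂ k = 0
  diagonal : ParallelLines A B 1 (-1) e₃
  oblique : ParallelLines A B 1 (-r) e₄

lemma invLine_infinity (A B : P3) :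
    InvLine (affineForm A B 0) (affineForm A B 1) (affineForm A B 2) ![0, 0, 1] := by
  have hlin : lin ![0, 0, 1] = X 2 := by simp [lin]
  refine ⟨fun h => one_ne_zero (congrFun h 2), ?_⟩
  simp [hlin, affineForm]

lemma exists_pullForm_inv_eq_affineForm {d : ℕ} {A B : P3} {N : Matrix (Fin 3) (Fin 3) ℂ}
    (hN : N.det ≠ 0) (hN2 : N 2 = ![0, 0, 1])
    (h : IsFoliation d (affineForm A B 0) (affineForm A B 1) (affineForm A B 2)) :
    ∃ A' B', pullForm N⁻¹ (affineForm A B) = affineForm A' B' := by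
  have hdet : N⁻¹.det ≠ 0 := (isUnit_nonsing_inv_det N hN.isUnit).ne_zero
  have hinf : ![0, 0, 1] ᵥ* N⁻¹ = ![0, 0, 1] := by
    have hrow : ![0, 0, 1] ᵥ* N = ![0, 0, 1] := by
      rw [← hN2]
      ext m
      simp [vecMul, dotProduct, Fin.sum_univ_three, hN2]
    calc ![0, 0, 1] ᵥ* N⁻¹ = (![0, 0, 1] ᵥ* N) ᵥ* N⁻¹ := by rw [hrow]
      _ = ![0, 0, 1] := by rw [vecMul_vecMul, mul_nonsing_inv N hN.isUnit, vecMul_one]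
  exact exists_eq_affineForm (h.pull hdet) (hinf ▸ (invLine_infinity A B).pull hdet)

section Normalisation

variable {κ : Type*} {d : ℕ} {A B A' B' : P3} {K : Finset κ} {s t : κ → ℂ}

lemma AffineArrangement.exists_intercepts (h : AffineArrangement d A B K s t) {ρ : ℂ} {n : ℕ}
    (hn : (K.filter (s · = ρ)).card = n) : ∃ e : Fin n → ℂ, Function.Injective e ∧
      ∀ k, InvLine (affineForm A B 0) (affineForm A B 1) (affineForm A B 2) ![1, -ρ, -e k] := by
  set f := (Finset.equivFinOfCardEq hn).symm
  have hmem : ∀ k, (f k : κ) ∈ K ∧ s (f k) = ρ := fun k => Finset.mem_filter.1 (f k).2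
  refine ⟨fun k => t (f k), fun i j hij => f.injective (Subtype.ext ?_), fun k => ?_⟩
  · exact h.injOn (hmem i).1 (hmem j).1 (Prod.ext ((hmem i).2.trans (hmem j).2.symm) hij)
  · have hinv := h.invLine _ (hmem k).1
    rwa [(hmem k).2] at hinv

lemma parallelLines_pullForm_inv {N : Matrix (Fin 3) (Fin 3) ℂ} (hN : N.det ≠ 0)
    (hpull : pullForm N⁻¹ (affineForm A B) = affineForm A' B') (hN2 : N 2 = ![0, 0, 1])
    {u v c ρ w : ℂ} (hc : c ≠ 0) (huv : u • N 0 + v • N 1 = ![c, -(c * ρ), w]) {n : ℕ}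
    {e : Fin n → ℂ} (he : Function.Injective e)
    (hinv : ∀ k, InvLine (affineForm A B 0) (affineForm A B 1) (affineForm A B 2) ![1, -ρ, -e k]) :
    ParallelLines A' B' u v fun k => w + c * e k where
  injective i j hij := he (mul_left_cancel₀ hc (add_left_cancel hij))
  invLine k := by
    have hdet : N⁻¹.det ≠ 0 := (isUnit_nonsing_inv_det N hN.isUnit).ne_zero
    have hrow : ![u, v, -(w + c * e k)] ᵥ* N = c • ![1, -ρ, -e k] := by
      have hexpand : ![u, v, -(w + c * e k)] ᵥ* N =
          u • N 0 + v • N 1 + (-(w + c * e k)) • N 2 := by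
        ext m
        simp [vecMul, dotProduct, Fin.sum_univ_three]
      rw [hexpand, huv, hN2]
      ext m
      fin_cases m <;> simp
    have hline : c • ![1, -ρ, -e k] ᵥ* N⁻¹ = ![u, v, -(w + c * e k)] := by
      rw [← smul_vecMul, ← hrow, vecMul_vecMul, mul_nonsing_inv N hN.isUnit, vecMul_one]
    rw [← hpull, ← hline]
    exact ((hinv k).pull hdet).smul hc

lemma exists_sum_add_mul_eq_zero {n : ℕ} (hn : n ≠ 0) (c : ℂ) (e : Fin n → ℂ) :
    ∃ w, ∑ k, (w + c * e k) = 0 := by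
  have hn' : (n : ℂ) ≠ 0 := Nat.cast_ne_zero.2 hn
  refine ⟨-(c * ∑ k, e k) / n, ?_⟩
  rw [Finset.sum_add_distrib, ← Finset.mul_sum, Finset.sum_const, Finset.card_univ,
    Fintype.card_fin, nsmul_eq_mul, mul_div_cancel₀ _ hn', neg_add_cancel]

lemma exists_cross_ratio {F : Type*} [Field F] {ρ : Fin 4 → F} (hρ : Function.Injective ρ) :
    ∃ c r : F, c ≠ 0 ∧ r ≠ 0 ∧ r ≠ 1 ∧ (c ≠ 1 ∧ c * ρ 1 - ρ 0 = (c - 1) * ρ 2) ∧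
      (c ≠ r ∧ c * ρ 1 - r * ρ 0 = (c - r) * ρ 3) := by
  have hsub : ∀ {i j}, i ≠ j → ρ i - ρ j ≠ 0 := fun hij => sub_ne_zero.2 (hρ.ne hij)
  have h21 : ρ 2 - ρ 1 ≠ 0 := hsub (by decide)
  have h20 : ρ 2 - ρ 0 ≠ 0 := hsub (by decide)
  have h30 : ρ 3 - ρ 0 ≠ 0 := hsub (by decide)
  have h31 : ρ 3 - ρ 1 ≠ 0 := hsub (by decide)
  have h10 : ρ 1 ≠ ρ 0 := hρ.ne (by decide)
  have h32 : ρ 3 ≠ ρ 2 := hρ.ne (by decide)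
  refine ⟨(ρ 2 - ρ 0) / (ρ 2 - ρ 1), (ρ 2 - ρ 0) / (ρ 2 - ρ 1) * ((ρ 3 - ρ 1) / (ρ 3 - ρ 0)),
    div_ne_zero h20 h21, mul_ne_zero (div_ne_zero h20 h21) (div_ne_zero h31 h30),
    fun h => ?_, ⟨fun h => ?_, ?_⟩, ⟨fun h => ?_, ?_⟩⟩
  · rw [div_mul_div_comm, div_eq_one_iff_eq (mul_ne_zero h21 h30)] at h
    have : (ρ 1 - ρ 0) * (ρ 3 - ρ 2) = 0 := by linear_combination h
    exact (mul_ne_zero (sub_ne_zero.2 h10) (sub_ne_zero.2 h32)) this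
  · rw [div_eq_one_iff_eq h21] at h
    exact h10 (by linear_combination h)
  · field_simp
    ring
  · rw [eq_comm, mul_eq_left₀ (div_ne_zero h20 h21), div_eq_one_iff_eq h30] at h
    exact h10 (by linear_combination -h)
  · field_simp
    ring

/-- In the new coordinates the slopes `ρ 0, ρ 1, ρ 2, ρ 3` become `∞, 0, 1, r`, where `r` is their
cross-ratio. -/
lemma AffineArrangement.exists_normalArrangement (h : AffineArrangement d A B K s t)
    {ρ : Fin 4 → ℂ} (hρ : Function.Injective ρ) {n : Fin 4 → ℕ}
    (hn : (fun i => (K.filter (s · = ρ i)).card) = n) (hn0 : n 0 ≠ 0) (hn1 : n 1 ≠ 0) :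
    ∃ M : Matrix (Fin 3) (Fin 3) ℂ, M.det ≠ 0 ∧ ∃ (A' B' : P3) (r : ℂ) (e : ∀ i, Fin (n i) → ℂ),
      pullForm M (affineForm A B) = affineForm A' B' ∧
        NormalArrangement d A' B' r (e 0) (e 1) (e 2) (e 3) := by
  choose e he hinv using fun i => h.exists_intercepts (congrFun hn i)
  obtain ⟨c, r, hc, hr, hr1, ⟨hc1, hρ2⟩, hcr, hρ3⟩ := exists_cross_ratio hρ
  obtain ⟨w₀, hw₀⟩ := exists_sum_add_mul_eq_zero hn0 1 (e 0)
  obtain ⟨w₁, hw₁⟩ := exists_sum_add_mul_eq_zero hn1 c (e 1)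
  set N : Matrix (Fin 3) (Fin 3) ℂ := of ![![c, -(c * ρ 1), w₁], ![1, -(1 * ρ 0), w₀], ![0, 0, 1]]
    with hN
  have hdet : N.det ≠ 0 := by
    have hdet : N.det = c * (ρ 1 - ρ 0) := by
      simp only [hN, det_fin_three, of_apply, cons_val]
      ring
    rw [hdet]
    exact mul_ne_zero hc (sub_ne_zero.2 (hρ.ne (by decide)))
  have hdet' : N⁻¹.det ≠ 0 := (isUnit_nonsing_inv_det N hdet.isUnit).ne_zero
  obtain ⟨A', B', hpull⟩ := exists_pullForm_inv_eq_affineForm hdet rfl h.isFoliation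
  have hlines : ∀ {u v c w : ℂ} (i : Fin 4), c ≠ 0 → u • N 0 + v • N 1 = ![c, -(c * ρ i), w] →
      ParallelLines A' B' u v fun k => w + c * e i k :=
    fun i hc huv => parallelLines_pullForm_inv hdet hpull rfl hc huv (he i) (hinv i)
  have hcomb : ∀ u v : ℂ, u • N 0 + v • N 1 =
      ![u * c + v, -(u * (c * ρ 1) + v * ρ 0), u * w₁ + v * w₀] := fun u v => by
    ext m
    fin_cases m <;> simp [hN]
    ring
  refine ⟨N⁻¹, hdet', A', B', r, fun i k => ![w₀, w₁, w₁ - w₀, w₁ - r * w₀] i +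
    ![1, c, c - 1, c - r] i * e i k, hpull, hpull ▸ h.isFoliation.pull hdet', hr, hr1,
    hlines 0 one_ne_zero ?_, hw₀, hlines 1 hc ?_, hw₁, hlines 2 (sub_ne_zero.2 hc1) ?_,
    hlines 3 (sub_ne_zero.2 hcr) ?_⟩
  · rw [hcomb]
    simp
  · rw [hcomb]
    simp
  · simp only [hcomb, cons_val, ← hρ2]
    congrm ![?_, ?_, ?_] <;> ring
  · simp only [hcomb, cons_val, ← hρ3]
    congrm ![?_, ?_, ?_] <;> ring

end Normalisation

lemma InvArrangement.exists_normalArrangement {ι : Type*} [Fintype ι] {ω : Fin 3 → P3}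
    {L : ι → Fin 3 → ℂ} (h : InvArrangement 4 ω L) (hι : Fintype.card ι = 12) :
    ∃ M : Matrix (Fin 3) (Fin 3) ℂ, M.det ≠ 0 ∧
      ∃ (A B : P3) (r : ℂ) (n : Fin 4 → ℕ) (e : ∀ i, Fin (n i) → ℂ),
        pullForm M ω = affineForm A B ∧ NormalArrangement 4 A B r (e 0) (e 1) (e 2) (e 3) ∧
          (n = ![4, 4, 1, 1] ∨ n = ![4, 3, 2, 1] ∨ n = ![3, 3, 3, 1]) := by
  classical
  obtain ⟨i, j, k, hjk, hij, hik⟩ := h.exists_ne_simpleCrossing (by norm_num) hι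
  obtain ⟨M, hM, hcorner⟩ := exists_cornerPosition h.ne_smul (h.invLine i).1 (h.invLine j).1 hij.1
  obtain ⟨A, B, hAB, haff⟩ := (h.pull hM).exists_affineArrangement hcorner hij.1
  have hsimple : ∀ {m}, SimpleCrossing L i m → ∀ l ∈ Finset.univ.erase i,
      lineSlope (fun k => L k ᵥ* M) l = lineSlope (fun k => L k ᵥ* M) m → l = m :=
    fun hm l hl => (hcorner.simpleCrossing_iff hij.1 hm.1.symm).1
      ((simpleCrossing_vecMul_iff hM).2 hm) l (Finset.ne_of_mem_erase hl)
  obtain ⟨ρ, hρ, hpattern⟩ := haff.exists_slopes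
    (Nat.succ_injective ((card_univ_erase_add_one i).trans hι))
    (Finset.mem_erase.2 ⟨hij.1.symm, Finset.mem_univ j⟩)
    (Finset.mem_erase.2 ⟨hik.1.symm, Finset.mem_univ k⟩) hjk (hsimple hij) (hsimple hik)
  obtain ⟨N, hN, A', B', r, e, hpull, hnormal⟩ := haff.exists_normalArrangement hρ rfl
    (by rcases hpattern with hn | hn | hn <;> simp [congrFun hn 0])
    (by rcases hpattern with hn | hn | hn <;> simp [congrFun hn 1])
  refine ⟨M * N, ?_, A', B', r, _, e, ?_, hnormal, hpattern⟩
  · rw [det_mul]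
    exact mul_ne_zero hM hN
  · rw [← pullForm_pullForm, hAB, hpull]

/-! ### Products of linear forms -/

lemma exists_eq_lin {P : P3} (hP : P.IsHomogeneous 1) : ∃ v, P = lin v := by
  have hC : ∀ i, pderiv i P = C (coeff 0 (pderiv i P)) := fun i =>
    totalDegree_eq_zero_iff_eq_C.1 <|
      (totalDegree_zero_iff_isHomogeneous _).2 hP.pderiv
  refine ⟨fun i => coeff 0 (pderiv i P), ?_⟩
  have heuler := hP.sum_X_mul_pderiv
  rw [one_smul, Fin.sum_univ_three, hC 0, hC 1, hC 2] at heuler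
  rw [lin]
  linear_combination -heuler

lemma prod_lin_isHomogeneous {n : ℕ} (l : Fin n → Fin 3 → ℂ) :
    (∏ k, lin (l k)).IsHomogeneous n := by
  simpa using IsHomogeneous.prod Finset.univ (fun k => lin (l k)) (fun _ => 1)
    fun k _ => lin_isHomogeneous (l k)

lemma exists_eq_C_mul_prod_lin {n : ℕ} {l : Fin n → Fin 3 → ℂ} (hl : ∀ k, l k ≠ 0) {P : P3}
    (hP : P.IsHomogeneous n) (h : ∏ k, lin (l k) ∣ P) : ∃ α, P = C α * ∏ k, lin (l k) := by
  obtain ⟨Q, rfl⟩ := h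
  have hQ : Q.IsHomogeneous 0 := isHomogeneous_of_mul_left (prod_lin_isHomogeneous l)
    (Finset.prod_ne_zero_iff.2 fun k _ => lin_ne_zero (hl k)) hP
  rw [totalDegree_eq_zero_iff_eq_C.1 ((totalDegree_zero_iff_isHomogeneous _).2 hQ)]
  exact ⟨_, mul_comm _ _⟩

lemma exists_eq_lin_mul_prod_lin {n : ℕ} {l : Fin n → Fin 3 → ℂ} (hl : ∀ k, l k ≠ 0) {P : P3}
    (hP : P.IsHomogeneous (n + 1)) (h : ∏ k, lin (l k) ∣ P) : ∃ v, P = lin v * ∏ k, lin (l k) := by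
  obtain ⟨Q, rfl⟩ := h
  obtain ⟨v, rfl⟩ := exists_eq_lin <| isHomogeneous_of_mul_left (prod_lin_isHomogeneous l)
    (Finset.prod_ne_zero_iff.2 fun k _ => lin_ne_zero (hl k)) hP
  exact ⟨v, mul_comm _ _⟩

lemma prod_sub_C_mul_ne_pow {n : ℕ} {e : Fin n → ℂ} (he : Function.Injective e) (hn : 2 ≤ n) :
    ¬∀ Y Z : P3, ∏ k, (Y - C (e k) * Z) = Y ^ n := fun h => by
  have hroot : ∀ k, e k = 0 := fun k => by
    have heval := congrArg (eval 0) (h (C (e k)) 1)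
    rw [Finset.prod_eq_zero (Finset.mem_univ k) (by ring), map_zero, map_pow, eval_C] at heval
    exact pow_eq_zero_iff (by omega) |>.1 heval.symm
  have hne := he.ne (a₁ := ⟨0, by omega⟩) (a₂ := ⟨1, by omega⟩) (by simp)
  exact hne ((hroot _).trans (hroot _).symm)

/-- The homogenisation of the depressed cubic `Y ^ 3 + p Y + q`. -/
def depressedCubic (p q : ℂ) (Y Z : P3) : P3 := Y ^ 3 + C p * Y * Z ^ 2 + C q * Z ^ 3

/-- The homogenisation of the depressed quartic `Y ^ 4 + p Y ^ 2 + q Y + s`. -/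
def depressedQuartic (p q s : ℂ) (Y Z : P3) : P3 :=
  Y ^ 4 + C p * Y ^ 2 * Z ^ 2 + C q * Y * Z ^ 3 + C s * Z ^ 4

lemma exists_prod_eq_depressedCubic {e : Fin 3 → ℂ} (he : Function.Injective e)
    (hsum : ∑ k, e k = 0) :
    ∃ p q, (∀ Y Z : P3, ∏ k, (Y - C (e k) * Z) = depressedCubic p q Y Z) ∧
      ¬(p = 0 ∧ q = 0) := by
  have he2 : e 2 = -(e 0 + e 1) := by
    rw [Fin.sum_univ_three] at hsum
    linear_combination hsum
  have hprod : ∀ Y Z : P3, ∏ k, (Y - C (e k) * Z) =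
      depressedCubic (e 0 * e 1 + e 0 * e 2 + e 1 * e 2) (-(e 0 * e 1 * e 2)) Y Z :=
    fun Y Z => by
      simp only [depressedCubic, Fin.prod_univ_three, he2, map_neg, map_add, map_mul]
      ring
  refine ⟨_, _, hprod, fun ⟨hp, hq⟩ => ?_⟩
  exact prod_sub_C_mul_ne_pow he (by norm_num) fun Y Z => by simp [hprod, depressedCubic, hp, hq]

lemma exists_prod_eq_depressedQuartic {e : Fin 4 → ℂ} (he : Function.Injective e)
    (hsum : ∑ k, e k = 0) :
    ∃ p q s, (∀ Y Z : P3, ∏ k, (Y - C (e k) * Z) = depressedQuartic p q s Y Z) ∧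
      ¬(p = 0 ∧ q = 0 ∧ s = 0) := by
  have he3 : e 3 = -(e 0 + e 1 + e 2) := by
    rw [Fin.sum_univ_four] at hsum
    linear_combination hsum
  have hprod : ∀ Y Z : P3, ∏ k, (Y - C (e k) * Z) =
      depressedQuartic (e 0 * e 1 + e 0 * e 2 + e 1 * e 2 + (e 0 + e 1 + e 2) * e 3)
        (-(e 0 * e 1 * e 2 + (e 0 * e 1 + e 0 * e 2 + e 1 * e 2) * e 3))
        (e 0 * e 1 * e 2 * e 3) Y Z :=
    fun Y Z => by
      simp only [depressedQuartic, Fin.prod_univ_four, he3, map_neg, map_add, map_mul]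
      ring
  refine ⟨_, _, _, hprod, fun ⟨hp, hq, hs⟩ => ?_⟩
  exact prod_sub_C_mul_ne_pow he (by norm_num)
    fun Y Z => by simp [hprod, depressedQuartic, hp, hq, hs]

lemma eq_zero_of_quartic_eq_zero {R : Type*} [CommRing R] [IsDomain R] [CharZero R]
    {a₀ a₁ a₂ a₃ a₄ : R} (h : ∀ y, a₀ + a₁ * y + a₂ * y ^ 2 + a₃ * y ^ 3 + a₄ * y ^ 4 = 0) :
    a₀ = 0 ∧ a₁ = 0 ∧ a₂ = 0 ∧ a₃ = 0 ∧ a₄ = 0 := by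
  have hinj : Function.Injective fun i : Fin 5 => ((i : ℕ) : R) :=
    Nat.cast_injective.comp Fin.val_injective
  have hzero := eq_zero_of_forall_index_sum_mul_pow_eq_zero (v := ![a₀, a₁, a₂, a₃, a₄]) hinj
    fun j => by simpa [Fin.sum_univ_five] using h (j : ℕ)
  simpa using hzero

lemma eq_zero_of_quadratic_eq_zero {R : Type*} [CommRing R] [IsDomain R] {e : Fin 3 → R}
    (he : Function.Injective e) {a₀ a₁ a₂ : R} (h : ∀ k, a₀ + a₁ * e k + a₂ * e k ^ 2 = 0) :
    a₀ = 0 ∧ a₁ = 0 ∧ a₂ = 0 := by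
  have hzero := eq_zero_of_forall_index_sum_mul_pow_eq_zero (v := ![a₀, a₁, a₂]) he
    fun j => by simpa [Fin.sum_univ_three] using h j
  simpa using hzero

section ParallelLines

variable {A B : P3} {n : ℕ} {e : Fin n → ℂ}

lemma ParallelLines.prod_dvd_left (h : ParallelLines A B 0 1 e) :
    ∏ k, lin ![0, 1, -e k] ∣ A := by
  simpa using prod_lin_dvd_of_invLine h.injective.injOn (Or.inr one_ne_zero) fun k _ => h.invLine k

lemma ParallelLines.prod_dvd_right (h : ParallelLines A B 1 0 e) :
    ∏ k, lin ![1, 0, -e k] ∣ B := by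
  simpa using prod_lin_dvd_of_invLine h.injective.injOn (Or.inl one_ne_zero) fun k _ => h.invLine k

lemma ParallelLines.eval_eq_zero {r : ℂ} (h : ParallelLines A B 1 (-r) e) (k : Fin n) (y : ℂ) :
    r * eval ![r * y + e k, y, 1] A + eval ![r * y + e k, y, 1] B = 0 := by
  have hdvd := map_dvd (eval ![r * y + e k, y, 1])
    (lin_dvd_of_invLine (h.invLine k) (Or.inl one_ne_zero))
  have hlin : eval ![r * y + e k, y, 1] (lin ![1, -r, -e k]) = 0 := by
    simp [lin]
  rw [hlin, zero_dvd_iff] at hdvd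
  simp only [cons_val, map_sub, map_mul, eval_C] at hdvd
  linear_combination -hdvd

lemma lin_horizontal (e : ℂ) : lin ![0, 1, -e] = X 1 - C e * X 2 := by
  simp [lin, sub_eq_add_neg]

lemma lin_vertical (e : ℂ) : lin ![1, 0, -e] = X 0 - C e * X 2 := by
  simp [lin, sub_eq_add_neg]

lemma ParallelLines.eq_C_mul_depressedQuartic_left {e : Fin 4 → ℂ} (h : ParallelLines A B 0 1 e)
    (hsum : ∑ k, e k = 0) (hA : A.IsHomogeneous 4) :
    ∃ α p q s, A = C α * depressedQuartic p q s (X 1) (X 2) ∧ ¬(p = 0 ∧ q = 0 ∧ s = 0) := by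
  obtain ⟨p, q, s, hprod, hne⟩ := exists_prod_eq_depressedQuartic h.injective hsum
  obtain ⟨α, hα⟩ := exists_eq_C_mul_prod_lin (fun k => (h.invLine k).1) hA h.prod_dvd_left
  simp only [lin_horizontal, hprod] at hα
  exact ⟨α, p, q, s, hα, hne⟩

lemma ParallelLines.eq_C_mul_depressedQuartic_right {e : Fin 4 → ℂ} (h : ParallelLines A B 1 0 e)
    (hsum : ∑ k, e k = 0) (hB : B.IsHomogeneous 4) :
    ∃ β p q s, B = C β * depressedQuartic p q s (X 0) (X 2) := by
  obtain ⟨p, q, s, hprod, -⟩ := exists_prod_eq_depressedQuartic h.injective hsum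
  obtain ⟨β, hβ⟩ := exists_eq_C_mul_prod_lin (fun k => (h.invLine k).1) hB h.prod_dvd_right
  simp only [lin_vertical, hprod] at hβ
  exact ⟨β, p, q, s, hβ⟩

lemma ParallelLines.eq_lin_mul_depressedCubic_left {e : Fin 3 → ℂ} (h : ParallelLines A B 0 1 e)
    (hsum : ∑ k, e k = 0) (hA : A.IsHomogeneous 4) :
    ∃ v p q, A = lin v * depressedCubic p q (X 1) (X 2) ∧ ¬(p = 0 ∧ q = 0) := by
  obtain ⟨p, q, hprod, hne⟩ := exists_prod_eq_depressedCubic h.injective hsum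
  obtain ⟨v, hv⟩ := exists_eq_lin_mul_prod_lin (fun k => (h.invLine k).1) hA h.prod_dvd_left
  simp only [lin_horizontal, hprod] at hv
  exact ⟨v, p, q, hv, hne⟩

lemma ParallelLines.eq_lin_mul_depressedCubic_right {e : Fin 3 → ℂ} (h : ParallelLines A B 1 0 e)
    (hsum : ∑ k, e k = 0) (hB : B.IsHomogeneous 4) :
    ∃ v p q, B = lin v * depressedCubic p q (X 0) (X 2) := by
  obtain ⟨p, q, hprod, -⟩ := exists_prod_eq_depressedCubic h.injective hsum
  obtain ⟨v, hv⟩ := exists_eq_lin_mul_prod_lin (fun k => (h.invLine k).1) hB h.prod_dvd_right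
  simp only [lin_vertical, hprod] at hv
  exact ⟨v, p, q, hv⟩

end ParallelLines

@[simp]
lemma eval_depressedCubic (v : Fin 3 → ℂ) (p q : ℂ) (Y Z : P3) :
    eval v (depressedCubic p q Y Z) =
      eval v Y ^ 3 + p * eval v Y * eval v Z ^ 2 + q * eval v Z ^ 3 := by
  simp [depressedCubic]

@[simp]
lemma eval_depressedQuartic (v : Fin 3 → ℂ) (p q s : ℂ) (Y Z : P3) :
    eval v (depressedQuartic p q s Y Z) =
      eval v Y ^ 4 + p * eval v Y ^ 2 * eval v Z ^ 2 + q * eval v Y * eval v Z ^ 3 +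
        s * eval v Z ^ 4 := by
  simp [depressedQuartic]

/-! ### The Fermat foliation -/

section Classification

variable {A B : P3} {r : ℂ}

lemma not_left_right_eq_zero {d : ℕ}
    (h : IsFoliation d (affineForm A B 0) (affineForm A B 1) (affineForm A B 2)) (hd : d ≠ 0) :
    ¬(A = 0 ∧ B = 0) := fun ⟨hA, hB⟩ => C_mul_add_ne_zero_of_isFoliation h hd 0 (by simp [hA, hB])

lemma NormalArrangement.exists_eq_depressedQuartic {e₁ e₂ : Fin 4 → ℂ} {e₃ e₄ : Fin 1 → ℂ}
    (h : NormalArrangement 4 A B r e₁ e₂ e₃ e₄) :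
    ∃ α p q s, α ≠ 0 ∧ ¬(p = 0 ∧ q = 0 ∧ s = 0) ∧
      A = C α * depressedQuartic p q s (X 1) (X 2) ∧
      B = C (-α) * depressedQuartic p q s (X 0) (X 2) := by
  obtain ⟨α, p, q, s, hA, hpqs⟩ := h.horizontal.eq_C_mul_depressedQuartic_left h.horizontal_sum
    (affineForm_isHomogeneous_left h.isFoliation)
  obtain ⟨β, p', q', s', hB⟩ := h.vertical.eq_C_mul_depressedQuartic_right h.vertical_sum
    (affineForm_isHomogeneous_right h.isFoliation)
  have hdiag := h.diagonal.eval_eq_zero 0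
  generalize e₃ 0 = m at hdiag
  simp only [hA, hB, map_mul, eval_C, eval_X, eval_depressedQuartic, cons_val] at hdiag
  obtain ⟨h0, h1, h2, h3, h4⟩ := eq_zero_of_quartic_eq_zero
    (a₄ := α + β) (a₃ := 4 * β * m) (a₂ := α * p + β * (6 * m ^ 2 + p'))
    (a₁ := α * q + β * (4 * m ^ 3 + 2 * p' * m + q'))
    (a₀ := α * s + β * (m ^ 4 + p' * m ^ 2 + q' * m + s'))
    fun y => by linear_combination hdiag y
  obtain rfl : β = -α := by linear_combination h4
  have hα : α ≠ 0 := by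
    rintro rfl
    exact not_left_right_eq_zero h.isFoliation (by norm_num) (by simp [hA, hB])
  obtain rfl : m = 0 := by simpa [hα] using h3
  obtain rfl : p' = p := mul_left_cancel₀ hα (by linear_combination -h2)
  obtain rfl : q' = q := mul_left_cancel₀ hα (by linear_combination -h1)
  obtain rfl : s' = s := mul_left_cancel₀ hα (by linear_combination -h0)
  exact ⟨α, p', q', s', hα, hpqs, hA, hB⟩

lemma NormalArrangement.exists_eq_fermat {e₁ e₂ : Fin 4 → ℂ} {e₃ e₄ : Fin 1 → ℂ}
    (h : NormalArrangement 4 A B r e₁ e₂ e₃ e₄) :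
    ∃ α q, α ≠ 0 ∧ q ≠ 0 ∧ A = C α * depressedQuartic 0 q 0 (X 1) (X 2) ∧
      B = C (-α) * depressedQuartic 0 q 0 (X 0) (X 2) := by
  obtain ⟨α, p, q, s, hα, hpqs, hA, hB⟩ := h.exists_eq_depressedQuartic
  have hobl := h.oblique.eval_eq_zero 0
  generalize e₄ 0 = n at hobl
  simp only [hA, hB, map_mul, eval_C, eval_X, eval_depressedQuartic, cons_val] at hobl
  obtain ⟨h0, -, h2, h3, -⟩ := eq_zero_of_quartic_eq_zero
    (a₄ := α * (r - r ^ 4)) (a₃ := -4 * α * r ^ 3 * n)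
    (a₂ := α * (r * p - (6 * r ^ 2 * n ^ 2 + p * r ^ 2)))
    (a₁ := α * (r * q - (4 * r * n ^ 3 + 2 * p * r * n + q * r)))
    (a₀ := α * (r * s - (n ^ 4 + p * n ^ 2 + q * n + s)))
    fun y => by linear_combination hobl y
  have hr := h.ratio_ne_zero
  have hr1 := sub_ne_zero.2 h.ratio_ne_one
  obtain rfl : n = 0 := by simpa [hα, hr] using h3
  obtain rfl : p = 0 := by
    have : α * r * (r - 1) * p = 0 := by linear_combination -h2
    simpa [hα, hr, hr1] using this
  obtain rfl : s = 0 := by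
    have : α * (r - 1) * s = 0 := by linear_combination h0
    simpa [hα, hr1] using this
  exact ⟨α, q, hα, fun hq => hpqs ⟨rfl, hq, rfl⟩, hA, hB⟩

lemma linConj3_fermat {α q : ℂ} (hα : α ≠ 0) (hq : q ≠ 0)
    (hA : A = C α * depressedQuartic 0 q 0 (X 1) (X 2))
    (hB : B = C (-α) * depressedQuartic 0 q 0 (X 0) (X 2)) :
    LinConj3 (affineForm A B 0) (affineForm A B 1) (affineForm A B 2) aF bF cF := by
  obtain ⟨μ, hμ⟩ := IsAlgClosed.exists_pow_nat_eq (-q) (n := 3) (by norm_num)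
  obtain rfl : q = -μ ^ 3 := by rw [hμ, neg_neg]
  have hμ0 : μ ≠ 0 := by
    rintro rfl
    simp at hq
  have hpull : ∀ i, pullForm !![μ, 0, 0; 0, μ, 0; 0, 0, 1] (affineForm A B) i =
      C (-α * μ ^ 5) * ![aF, bF, cF] i := fun i => by
    fin_cases i <;>
      simp only [pullForm_apply, Fin.sum_univ_three, affineForm, hA, hB, depressedQuartic, lin, aF,
        bF, cF, of_apply, cons_val, compM_mul, compM_add, compM_neg, compM_pow, compM_C, compM_X,
        C_mul, C_neg, C_pow, C_0, C_1, zero_mul, add_zero, Fin.zero_eta, Fin.mk_one,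
        Fin.reduceFinMk] <;>
      ring
  exact ⟨_, by simp [det_fin_three, hμ0], _, by simp [hα, hμ0], hpull 0, hpull 1, hpull 2⟩

/-! ### Comparing coefficients along parallel lines -/

lemma ParallelLines.coeff_eq_zero {n : ℕ} {e : Fin n → ℂ} {v : Fin 3 → ℂ} {p q : ℂ}
    (h : ParallelLines A (lin v * depressedCubic p q (X 0) (X 2)) 1 (-r) e) (k : Fin n)
    {a₀ a₁ a₂ a₃ a₄ : ℂ} (hA : ∀ y, eval ![r * y + e k, y, 1] A =
      a₀ + a₁ * y + a₂ * y ^ 2 + a₃ * y ^ 3 + a₄ * y ^ 4) :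
    r * a₀ + (e k ^ 3 + p * e k + q) * (v 0 * e k + v 2) = 0 ∧
    r * a₁ + (e k ^ 3 + p * e k + q) * (v 0 * r + v 1) +
      (3 * r * e k ^ 2 + p * r) * (v 0 * e k + v 2) = 0 ∧
    r * a₂ + (3 * r * e k ^ 2 + p * r) * (v 0 * r + v 1) +
      3 * r ^ 2 * e k * (v 0 * e k + v 2) = 0 ∧
    r * a₃ + 3 * r ^ 2 * e k * (v 0 * r + v 1) + r ^ 3 * (v 0 * e k + v 2) = 0 ∧
    r * a₄ + r ^ 3 * (v 0 * r + v 1) = 0 :=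
  eq_zero_of_quartic_eq_zero fun y => by
    have hline := h.eval_eq_zero k y
    simp only [hA, lin, map_mul, map_add, eval_C, eval_X, eval_depressedCubic, cons_val] at hline
    linear_combination hline

lemma ParallelLines.coeff_eq_zero_of_depressedQuartic {n : ℕ} {e : Fin n → ℂ} {v : Fin 3 → ℂ}
    {α p q s p' q' : ℂ}
    (h : ParallelLines (C α * depressedQuartic p q s (X 1) (X 2))
      (lin v * depressedCubic p' q' (X 0) (X 2)) 1 (-r) e) (k : Fin n) :
    r * (α * q) + (e k ^ 3 + p' * e k + q') * (v 0 * r + v 1) +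
      (3 * r * e k ^ 2 + p' * r) * (v 0 * e k + v 2) = 0 ∧
    r * (α * p) + (3 * r * e k ^ 2 + p' * r) * (v 0 * r + v 1) +
      3 * r ^ 2 * e k * (v 0 * e k + v 2) = 0 ∧
    3 * r ^ 2 * e k * (v 0 * r + v 1) + r ^ 3 * (v 0 * e k + v 2) = 0 ∧
    r * α + r ^ 3 * (v 0 * r + v 1) = 0 := by
  obtain ⟨-, h1, h2, h3, h4⟩ := h.coeff_eq_zero k (a₀ := α * s) (a₁ := α * q) (a₂ := α * p)
    (a₃ := 0) (a₄ := α) fun y => by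
      simp only [map_mul, eval_C, eval_X, eval_depressedQuartic, cons_val]
      ring
  exact ⟨h1, h2, by simpa using h3, h4⟩

lemma ParallelLines.coeff_eq_zero_of_depressedCubic {n : ℕ} {e : Fin n → ℂ} {u v : Fin 3 → ℂ}
    {p q p' q' : ℂ}
    (h : ParallelLines (lin u * depressedCubic p q (X 1) (X 2))
      (lin v * depressedCubic p' q' (X 0) (X 2)) 1 (-r) e) (k : Fin n) :
    r * (q * (u 0 * e k + u 2)) + (e k ^ 3 + p' * e k + q') * (v 0 * e k + v 2) = 0 ∧
    r * (q * (u 0 * r + u 1) + p * (u 0 * e k + u 2)) +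
      (e k ^ 3 + p' * e k + q') * (v 0 * r + v 1) +
      (3 * r * e k ^ 2 + p' * r) * (v 0 * e k + v 2) = 0 ∧
    r * (p * (u 0 * r + u 1)) + (3 * r * e k ^ 2 + p' * r) * (v 0 * r + v 1) +
      3 * r ^ 2 * e k * (v 0 * e k + v 2) = 0 ∧
    r * (u 0 * e k + u 2) + 3 * r ^ 2 * e k * (v 0 * r + v 1) + r ^ 3 * (v 0 * e k + v 2) = 0 ∧
    r * (u 0 * r + u 1) + r ^ 3 * (v 0 * r + v 1) = 0 :=
  h.coeff_eq_zero k fun y => by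
    simp only [lin, map_mul, map_add, eval_C, eval_X, eval_depressedCubic, cons_val]
    ring

/-! ### Excluding the multiplicities `(4, 3, 2, 1)` -/

lemma NormalArrangement.exists_eq_quartic_cubic {e₁ : Fin 4 → ℂ} {e₂ : Fin 3 → ℂ}
    {e₃ : Fin 2 → ℂ} {e₄ : Fin 1 → ℂ} (h : NormalArrangement 4 A B r e₁ e₂ e₃ e₄) :
    ∃ α m q s q', α ≠ 0 ∧ m ≠ 0 ∧ A = C α * depressedQuartic (-10 * m ^ 2) q s (X 1) (X 2) ∧
      B = lin ![3 * α, -4 * α, 0] * depressedCubic (-4 * m ^ 2) q' (X 0) (X 2) := by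
  obtain ⟨α, p, q, s, rfl, -⟩ := h.horizontal.eq_C_mul_depressedQuartic_left h.horizontal_sum
    (affineForm_isHomogeneous_left h.isFoliation)
  obtain ⟨v, p', q', rfl⟩ := h.vertical.eq_lin_mul_depressedCubic_right h.vertical_sum
    (affineForm_isHomogeneous_right h.isFoliation)
  obtain ⟨m1, m2, m3, m4⟩ := h.diagonal.coeff_eq_zero_of_depressedQuartic 0
  obtain ⟨n1, n2, n3, n4⟩ := h.diagonal.coeff_eq_zero_of_depressedQuartic 1
  have hmn := sub_ne_zero.2 (h.diagonal.injective.ne zero_ne_one)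
  generalize e₃ 0 = m at *
  generalize e₃ 1 = n at *
  have h01 : 4 * v 0 + 3 * v 1 = 0 := mul_left_cancel₀ hmn (by linear_combination m3 - n3)
  have hv0 : v 0 = 3 * α := by linear_combination h01 - 3 * m4
  have hv1 : v 1 = -4 * α := by linear_combination 4 * m4 - h01
  have hv2 : v 2 = 0 := by linear_combination m3 - m * h01
  have hv : v = ![3 * α, -4 * α, 0] := by
    ext i
    fin_cases i
    exacts [hv0, hv1, hv2]
  have hα : α ≠ 0 := by
    rintro rfl
    exact not_left_right_eq_zero h.isFoliation (by norm_num) (by simp [hv, lin])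
  rw [hv0, hv1, hv2] at m1 m2 n1 n2
  obtain rfl : n = -m := by
    have : α * (m - n) * (m + n) = 0 := by linear_combination (1 / 6) * (m2 - n2)
    have : m + n = 0 := by simpa [hα, hmn] using this
    linear_combination this
  have hm : m ≠ 0 := by
    rintro rfl
    simp at hmn
  obtain rfl : p' = -4 * m ^ 2 :=
    mul_left_cancel₀ (mul_ne_zero hα hm) (by linear_combination (1 / 4) * (m1 - n1))
  obtain rfl : p = -10 * m ^ 2 := mul_left_cancel₀ hα (by linear_combination m2)
  exact ⟨α, m, q, s, q', hα, hm, rfl, by rw [hv]⟩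

lemma not_normalArrangement_four_three_two_one {e₁ : Fin 4 → ℂ} {e₂ : Fin 3 → ℂ} {e₃ : Fin 2 → ℂ}
    {e₄ : Fin 1 → ℂ} : ¬NormalArrangement 4 A B r e₁ e₂ e₃ e₄ := fun h => by
  obtain ⟨α, m, q, s, q', hα, hm, rfl, rfl⟩ := h.exists_eq_quartic_cubic
  obtain ⟨-, k2, k3, k4⟩ := h.oblique.coeff_eq_zero_of_depressedQuartic 0
  generalize e₄ 0 = n at *
  simp only [cons_val] at k2 k3 k4
  have hr := h.ratio_ne_zero
  have hr1 := sub_ne_zero.2 h.ratio_ne_one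
  have hquad : 3 * r ^ 2 - r - 1 = 0 :=
    mul_left_cancel₀ (mul_ne_zero (mul_ne_zero hα hr) hr1) (by linear_combination k4)
  obtain rfl : n = 0 :=
    mul_left_cancel₀ (mul_ne_zero (mul_ne_zero hα (pow_ne_zero 2 hr)) hr1)
      (by linear_combination (1 / 12) * k3)
  have hhalf : 6 - 12 * r = 0 :=
    mul_left_cancel₀ (mul_ne_zero (mul_ne_zero hα hr) (pow_ne_zero 2 hm))
      (by linear_combination k2)
  obtain rfl : r = 1 / 2 := by linear_combination (-1 / 12) * hhalf
  norm_num at hquad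

/-! ### The Hesse pencil -/

lemma NormalArrangement.exists_eq_depressedCubic {e₁ e₂ e₃ : Fin 3 → ℂ} {e₄ : Fin 1 → ℂ}
    (h : NormalArrangement 4 A B r e₁ e₂ e₃ e₄) :
    ∃ δ p q q', δ ≠ 0 ∧ ¬(p = 0 ∧ q = 0) ∧
      A = lin ![2 * δ, -δ, 0] * depressedCubic p q (X 1) (X 2) ∧
      B = lin ![δ, -2 * δ, 0] * depressedCubic p q' (X 0) (X 2) := by
  obtain ⟨u, p, q, rfl, hpq⟩ := h.horizontal.eq_lin_mul_depressedCubic_left h.horizontal_sum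
    (affineForm_isHomogeneous_left h.isFoliation)
  obtain ⟨v, p', q', rfl⟩ := h.vertical.eq_lin_mul_depressedCubic_right h.vertical_sum
    (affineForm_isHomogeneous_right h.isFoliation)
  have hcoeff := h.diagonal.coeff_eq_zero_of_depressedCubic
  obtain ⟨g0, g1, -⟩ := eq_zero_of_quadratic_eq_zero h.diagonal.injective
    (a₀ := u 2 + v 2) (a₁ := u 0 + 4 * v 0 + 3 * v 1) (a₂ := 0)
    fun k => by linear_combination (hcoeff k).2.2.2.1
  obtain ⟨k0, k1, k2⟩ := eq_zero_of_quadratic_eq_zero h.diagonal.injective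
    (a₀ := p * (u 0 + u 1) + p' * (v 0 + v 1)) (a₁ := 3 * v 2) (a₂ := 6 * v 0 + 3 * v 1)
    fun k => by linear_combination (hcoeff k).2.2.1
  have hv1 : v 1 = -2 * v 0 := by linear_combination (1 / 3) * k2
  have hv2 : v 2 = 0 := by linear_combination (1 / 3) * k1
  have hu0 : u 0 = 2 * v 0 := by linear_combination g1 - k2 + 3 * (hv1 - (1 / 3) * k2)
  have hu1 : u 1 = -v 0 := by linear_combination (hcoeff 0).2.2.2.2 - hu0 - hv1
  have hu2 : u 2 = 0 := by linear_combination g0 - hv2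
  have hu : u = ![2 * v 0, -v 0, 0] := by
    ext i
    fin_cases i
    exacts [hu0, hu1, hu2]
  have hv : v = ![v 0, -2 * v 0, 0] := by
    ext i
    fin_cases i
    exacts [rfl, hv1, hv2]
  have hδ : v 0 ≠ 0 := fun hδ => by
    rw [hδ] at hu hv
    exact not_left_right_eq_zero h.isFoliation (by norm_num) (by simp [hu, hv, lin])
  obtain rfl : p' = p := by
    rw [hu0, hu1, hv1] at k0
    exact mul_left_cancel₀ hδ (by linear_combination -k0)
  exact ⟨v 0, p', q, q', hδ, hpq, by rw [← hu], by rw [← hv]⟩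

lemma NormalArrangement.exists_eq_hesse {e₁ e₂ e₃ : Fin 3 → ℂ} {e₄ : Fin 1 → ℂ}
    (h : NormalArrangement 4 A B r e₁ e₂ e₃ e₄) :
    ∃ δ q, δ ≠ 0 ∧ q ≠ 0 ∧ r ^ 2 - r + 1 = 0 ∧
      A = lin ![2 * δ, -δ, 0] * depressedCubic 0 q (X 1) (X 2) ∧
      B = lin ![δ, -2 * δ, 0] * depressedCubic 0 (-q) (X 0) (X 2) := by
  obtain ⟨δ, p, q, q', hδ, hpq, rfl, rfl⟩ := h.exists_eq_depressedCubic
  obtain ⟨-, -, k2, k3, k4⟩ := h.oblique.coeff_eq_zero_of_depressedCubic 0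
  generalize e₄ 0 = n at *
  simp only [cons_val] at k2 k3 k4
  have hδr := mul_ne_zero (mul_ne_zero hδ h.ratio_ne_zero) (sub_ne_zero.2 h.ratio_ne_one)
  have hquad : r ^ 2 - r + 1 = 0 := mul_left_cancel₀ hδr (by linear_combination k4)
  have hhalf : 2 * r - 1 ≠ 0 := fun h1 => by
    obtain rfl : r = 1 / 2 := by linear_combination (1 / 2) * h1
    norm_num at hquad
  obtain rfl : n = 0 :=
    mul_left_cancel₀ (mul_ne_zero hδr hhalf) (by linear_combination (1 / 2) * k3)
  obtain rfl : p = 0 := mul_left_cancel₀ hδr (by linear_combination (1 / 3) * k2)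
  obtain ⟨k, hk⟩ : ∃ k, e₃ k ≠ 0 := by
    by_contra! h0
    exact h.diagonal.injective.ne zero_ne_one ((h0 0).trans (h0 1).symm)
  obtain ⟨m0, m1, -⟩ := h.diagonal.coeff_eq_zero_of_depressedCubic k
  simp only [cons_val] at m0 m1
  have hdiff : 2 * e₃ k ^ 3 + q - q' = 0 := mul_left_cancel₀ hδ (by linear_combination m1)
  have hsum : e₃ k ^ 3 + 2 * q + q' = 0 :=
    mul_left_cancel₀ (mul_ne_zero hδ hk) (by linear_combination m0)
  obtain rfl : q' = -q := by linear_combination (2 / 3) * hsum - (1 / 3) * hdiff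
  exact ⟨δ, q, hδ, fun hq => hpq ⟨rfl, hq⟩, hquad, rfl, rfl⟩

lemma linConj3_hesse {δ q : ℂ} (hδ : δ ≠ 0) (hq : q ≠ 0) (hr : r ^ 2 - r + 1 = 0)
    (hA : A = lin ![2 * δ, -δ, 0] * depressedCubic 0 q (X 1) (X 2))
    (hB : B = lin ![δ, -2 * δ, 0] * depressedCubic 0 (-q) (X 0) (X 2)) :
    LinConj3 (affineForm A B 0) (affineForm A B 1) (affineForm A B 2) aH bH cH := by
  obtain ⟨μ, hμ⟩ := IsAlgClosed.exists_pow_nat_eq (-q) (n := 3) (by norm_num)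
  obtain rfl : q = -μ ^ 3 := by rw [hμ, neg_neg]
  have hμ0 : μ ≠ 0 := by
    rintro rfl
    simp at hq
  have hr1 : r - 1 ≠ 0 := fun h1 => by
    obtain rfl : r = 1 := by linear_combination h1
    norm_num at hr
  have hhalf : 2 * r - 1 ≠ 0 := fun h1 => by
    obtain rfl : r = 1 / 2 := by linear_combination (1 / 2) * h1
    norm_num at hr
  have hdet : (!![-μ, -μ, 0; μ * (r - 1), -(μ * r), 0; 0, 0, 1 - r] :
      Matrix (Fin 3) (Fin 3) ℂ).det = -(μ ^ 2 * (2 * r - 1) * (r - 1)) := by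
    simp only [det_fin_three, of_apply, cons_val]
    ring
  have hrC : (C r : P3) ^ 2 - C r + 1 = 0 := by
    rw [← C_pow, ← C_sub, ← C_1, ← C_add, hr, C_0]
  have hpull : ∀ i, pullForm !![-μ, -μ, 0; μ * (r - 1), -(μ * r), 0; 0, 0, 1 - r]
      (affineForm A B) i = C (3 * δ * μ ^ 5 * (r - 1)) * ![aH, bH, cH] i := fun i => by
    fin_cases i <;>
      simp only [pullForm_apply, Fin.sum_univ_three, affineForm, hA, hB, depressedCubic, lin, aH,
        bH, cH, of_apply, cons_val, compM_mul, compM_add, compM_neg, compM_pow, compM_C, compM_X,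
        Fin.zero_eta, Fin.mk_one, Fin.reduceFinMk] <;>
      simp only [C_mul, C_neg, C_pow, C_sub, C_0, C_1, map_ofNat] <;>
      grind
  exact ⟨_, by simp [hdet, hμ0, hhalf, hr1], _, by simp [hδ, hμ0, hr1],
    hpull 0, hpull 1, hpull 2⟩

end Classification

/-- **Theorem B.** Up to automorphism of `ℙ²(ℂ)`, the Fermat foliation and the Hesse
pencil are the only reduced convex foliations of degree four: any degree-4 foliation with
12 pairwise non-proportional invariant lines is linearly conjugate to one of them. -/
theorem reduced_convex_degree_four_classification
    (a b c : P3) (hfol : IsFoliation 4 a b c)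
    (hlines : ∃ L : Fin 12 → (Fin 3 → ℂ),
      (∀ i, InvLine a b c (L i)) ∧
      ∀ i j, i ≠ j → ∀ t : ℂ, L i ≠ t • L j) :
    LinConj3 a b c aF bF cF ∨ LinConj3 a b c aH bH cH := by
  obtain ⟨L, hL, hne⟩ := hlines
  have harr : InvArrangement 4 ![a, b, c] L := ⟨hfol, hL, hne⟩
  obtain ⟨M, hM, A, B, r, n, e, hpull, hnormal, rfl | rfl | rfl⟩ :=
    harr.exists_normalArrangement (Fintype.card_fin 12)
  · obtain ⟨α, q, hα, hq, hA, hB⟩ := hnormal.exists_eq_fermat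
    exact Or.inl (LinConj3.of_pull (ω := ![a, b, c]) hM (hpull ▸ linConj3_fermat hα hq hA hB))
  · exact (not_normalArrangement_four_three_two_one hnormal).elim
  · obtain ⟨δ, q, hδ, hq, hr, hA, hB⟩ := hnormal.exists_eq_hesse
    exact Or.inr (LinConj3.of_pull (ω := ![a, b, c]) hM (hpull ▸ linConj3_hesse hδ hq hr hA hB))
end
end

section
/- Let A, B ∈ ℂ[x,y] be homogeneous of degree 4 without common factor, and suppose D = (∂A/∂x)(∂B/∂y) − (∂A/∂y)(∂B/∂x) = c·ℓ₁²ℓ₂²ℓ₃² for some c ∈ ℂ∖{0} and pairwise non-proportional linear forms ℓ₁, ℓ₂, ℓ₃ each dividing C = xA + yB (i.e. the homogeneous foliation defined by ω = A dx + B dy is convex of type 3·R₂). Then ω is linearly conjugate to ω₂ = y³(2x−y)dx + x³(x−2y)dy. -/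
open MvPolynomial

noncomputable section

/-- Polynomials in two variables `x = X 0`, `y = X 1` over `ℂ`. -/
abbrev P2 : Type := MvPolynomial (Fin 2) ℂ

/-- The inflection polynomial `D_ω = A_x B_y - A_y B_x` of `ω = A dx + B dy`. -/
def Dpoly (A B : P2) : P2 :=
  pderiv 0 A * pderiv 1 B - pderiv 1 A * pderiv 0 B

/-- The tangent cone `C_ω = xA + yB` of `ω = A dx + B dy`. -/
def Cpoly (A B : P2) : P2 := X 0 * A + X 1 * B

/-- `A` and `B` have no common (non-unit) factor. -/
def NoCommonFactor (A B : P2) : Prop := ∀ p : P2, p ∣ A → p ∣ B → IsUnit p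

/-- Convexity: every linear factor of `D_ω` divides `C_ω`. -/
def IsConvexPair (A B : P2) : Prop :=
  ∀ l : P2, l.IsHomogeneous 1 → l ≠ 0 → l ∣ Dpoly A B → l ∣ Cpoly A B

/-- Composition of a polynomial with the linear map `φ(x,y) = (a₁x + a₂y, a₃x + a₄y)`. -/
def comp2 (a₁ a₂ a₃ a₄ : ℂ) (p : P2) : P2 :=
  aeval ![C a₁ * X 0 + C a₂ * X 1, C a₃ * X 0 + C a₄ * X 1] p

/-- `ω = A dx + B dy` is linearly conjugate to `ω' = A' dx + B' dy`:
`φ*ω = λ ω'` for some `φ ∈ GL₂(ℂ)` and `λ ∈ ℂ \ {0}`. -/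
def LinConj (A B A' B' : P2) : Prop :=
  ∃ a₁ a₂ a₃ a₄ lam : ℂ, a₁ * a₄ - a₂ * a₃ ≠ 0 ∧ lam ≠ 0 ∧
    C a₁ * comp2 a₁ a₂ a₃ a₄ A + C a₃ * comp2 a₁ a₂ a₃ a₄ B = C lam * A' ∧
    C a₂ * comp2 a₁ a₂ a₃ a₄ A + C a₄ * comp2 a₁ a₂ a₃ a₄ B = C lam * B'

/-- ω₁ = y⁴dx − x⁴dy -/
def A1 : P2 := X 1 ^ 4
def B1 : P2 := -X 0 ^ 4
/-- ω₂ = y³(2x−y)dx + x³(x−2y)dy -/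
def A2 : P2 := X 1 ^ 3 * (2 * X 0 - X 1)
def B2 : P2 := X 0 ^ 3 * (X 0 - 2 * X 1)
/-- ω₃ = y²(6x²+4xy+y²)dx − x³(x+4y)dy -/
def A3 : P2 := X 1 ^ 2 * (6 * X 0 ^ 2 + 4 * X 0 * X 1 + X 1 ^ 2)
def B3 : P2 := -(X 0 ^ 3 * (X 0 + 4 * X 1))
/-- ω₄ = y³(4x+y)dx + x³(x+4y)dy -/
def A4 : P2 := X 1 ^ 3 * (4 * X 0 + X 1)
def B4 : P2 := X 0 ^ 3 * (X 0 + 4 * X 1)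
/-- ω₅ = y²(6x²+4xy+y²)dx + 3x⁴dy -/
def A5 : P2 := X 1 ^ 2 * (6 * X 0 ^ 2 + 4 * X 0 * X 1 + X 1 ^ 2)
def B5 : P2 := 3 * X 0 ^ 4


/-- Two polynomials are proportional (one is a constant multiple of the other). -/
def Proportional (l₁ l₂ : P2) : Prop := ∃ t : ℂ, l₁ = C t * l₂ ∨ l₂ = C t * l₁

/-!
A convex foliation is tangent to order three along each of the three lines. Let `l` be a linear
form dividing `C_ω`, let `F` be the contraction of `ω` with the direction of the line `l = 0`, and
let `T` be the contraction with a vector `w` such that `l(w) = 1`. Then `l` divides `F`, and Euler's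
identity gives `e D_ω = d (F ∂T - T ∂F)`, where `∂` is the derivative along `w` and `e` is a linear
form killed by `∂`. As `l` does not divide `T`, the multiplicity of `l` in `F` exceeds its
multiplicity in `D_ω`.

Rescale the forms so that `l₁ - l₂ = l₃`. The contractions along the three lines are then
`F₁`, `F₂` and `F₁ - F₂`, so that `Fᵢ = lᵢ³ mᵢ` with `mᵢ` linear and `l₁³ m₁ - l₂³ m₂ = l₃³ m₃`.
Up to a scalar the only such relation is
`l₁³ (l₁ - 2 l₂) - l₂³ (l₂ - 2 l₁) = (l₁ - l₂)³ (l₁ + l₂)`,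
and in the coordinates `l₁, l₂` it exhibits `ω` as a multiple of `ω₂`.
-/

section Derivation

variable {K R : Type*} [Field K] [CharZero K] [CommRing R] [IsDomain R] [Algebra K R]

theorem pow_succ_dvd_of_pow_dvd_wronskian (D : Derivation K R R) {l f g : R} (hl : Prime l)
    (hDl : ¬ l ∣ D l) (hg : ¬ l ∣ g) (hf : l ∣ f) {n : ℕ} (h : l ^ n ∣ f * D g - g * D f) :
    l ^ (n + 1) ∣ f := by
  induction n with
  | zero => simpa using hf
  | succ n ih =>
    obtain ⟨u, rfl⟩ := ih ((pow_dvd_pow l n.le_succ).trans h)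
    have hn : IsUnit ((n + 1 : ℕ) : R) := by
      simpa using (IsUnit.mk0 ((n + 1 : ℕ) : K) (Nat.cast_ne_zero.2 n.succ_ne_zero)).map
        (algebraMap K R)
    have hlead : l ^ (n + 1) ∣ l ^ n * (((n + 1 : ℕ) : R) * (g * D l * u)) := by
      have hmul : l ^ (n + 1) ∣ l ^ (n + 1) * (u * D g - g * D u) := dvd_mul_right _ _
      convert dvd_sub hmul h using 1
      simp only [Derivation.leibniz, Derivation.leibniz_pow, smul_eq_mul, nsmul_eq_mul,
        Nat.add_sub_cancel]
      ring
    have hdvd : l ∣ g * D l * u := by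
      rw [pow_succ, mul_dvd_mul_iff_left (pow_ne_zero n hl.ne_zero)] at hlead
      exact hn.dvd_mul_left.1 hlead
    have hu : l ∣ u := (hl.dvd_or_dvd hdvd).resolve_left (hl.not_dvd_mul hg hDl)
    rw [pow_succ]
    exact mul_dvd_mul_left _ hu

end Derivation

section MvPolynomial

variable {σ : Type*}

theorem associated_C_mul {K : Type*} [Field K] {a : K} (ha : a ≠ 0) (l : MvPolynomial σ K) :
    Associated (C a * l) l :=
  associated_unit_mul_left l _ ((IsUnit.mk0 a ha).map C)

theorem exists_isHomogeneous_eq_mul_of_dvd {R : Type*} [CommSemiring R] {l f : MvPolynomial σ R}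
    {i j : ℕ} (hl : l.IsHomogeneous i) (hf : f.IsHomogeneous (i + j)) (h : l ∣ f) :
    ∃ m : MvPolynomial σ R, m.IsHomogeneous j ∧ f = l * m := by
  obtain ⟨g, rfl⟩ := h
  refine ⟨homogeneousComponent j g, homogeneousComponent_isHomogeneous j g, ?_⟩
  let _ := MvPolynomial.gradedAlgebra (σ := σ) (R := R)
  have hcomp : homogeneousComponent (i + j) (l * g) = l * homogeneousComponent j g := by
    simp only [← decomposition.decompose'_apply]
    exact DirectSum.coe_decompose_mul_add_of_left_mem (homogeneousSubmodule σ R) hl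
  rw [← hcomp, homogeneousComponent_eq_self hf]

theorem prime_of_isHomogeneous_one {K : Type*} [Field K] {l : MvPolynomial σ K}
    (hl : l.IsHomogeneous 1) (hl0 : l ≠ 0) : Prime l := by
  refine (irreducible_of_totalDegree_eq_one (hl.totalDegree hl0) fun x hx ↦ ?_).prime
  refine IsUnit.mk0 x fun h0 ↦ hl0 (MvPolynomial.ext _ _ fun i ↦ ?_)
  simpa [h0] using hx i

end MvPolynomial

section LinForm

/-- The linear form `p x + q y`. -/
def linForm {R : Type*} [CommSemiring R] (p q : R) : MvPolynomial (Fin 2) R :=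
  C p * X 0 + C q * X 1

section CommSemiring

variable {R : Type*} [CommSemiring R]

theorem isHomogeneous_linForm (p q : R) : (linForm p q).IsHomogeneous 1 :=
  (isHomogeneous_C_mul_X p 0).add (isHomogeneous_C_mul_X q 1)

theorem exists_eq_linForm {l : MvPolynomial (Fin 2) R} (hl : l.IsHomogeneous 1) :
    ∃ p q : R, l = linForm p q := by
  rw [← mem_homogeneousSubmodule, homogeneousSubmodule_one_eq_span_X,
    Submodule.mem_span_range_iff_exists_fun] at hl
  obtain ⟨c, rfl⟩ := hl
  exact ⟨c 0, c 1, by simp [linForm, smul_eq_C_mul]⟩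

theorem C_mul_linForm (a p q : R) : C a * linForm p q = linForm (a * p) (a * q) := by
  simp only [linForm, C_mul]
  ring

theorem linForm_add_linForm (p q r s : R) :
    linForm p q + linForm r s = linForm (p + r) (q + s) := by
  simp only [linForm, C_add]
  ring

theorem eval_linForm (v : Fin 2 → R) (p q : R) : eval v (linForm p q) = p * v 0 + q * v 1 := by
  simp [linForm]

end CommSemiring

theorem linForm_sub_linForm {R : Type*} [CommRing R] (p q r s : R) :
    linForm p q - linForm r s = linForm (p - r) (q - s) := by
  simp only [linForm, C_sub]
  ring

theorem not_linForm_dvd_linForm {R : Type*} [CommRing R] [Nontrivial R] {p q w₁ w₂ : R}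
    (hw : p * w₁ + q * w₂ = 1) : ¬ linForm p q ∣ linForm w₂ (-w₁) := by
  intro h
  have hv := map_dvd (eval ![q, -p]) h
  simp only [eval_linForm, Matrix.cons_val_zero, Matrix.cons_val_one] at hv
  rw [show p * q + q * -p = 0 by ring,
    show w₂ * q + -w₁ * -p = 1 by linear_combination hw] at hv
  exact one_ne_zero (zero_dvd_iff.1 hv)

variable {K : Type*} [Field K] {p q r s : K}

theorem exists_eq_C_mul_linForm_add_C_mul_linForm (hdet : p * s - r * q ≠ 0)
    {m : MvPolynomial (Fin 2) K} (hm : m.IsHomogeneous 1) :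
    ∃ a b : K, m = C a * linForm p q + C b * linForm r s := by
  obtain ⟨t, u, rfl⟩ := exists_eq_linForm hm
  obtain ⟨e, he⟩ : ∃ e, e * (p * s - r * q) = 1 := ⟨_, inv_mul_cancel₀ hdet⟩
  refine ⟨e * (t * s - u * r), e * (u * p - t * q), ?_⟩
  rw [C_mul_linForm, C_mul_linForm, linForm_add_linForm]
  congr 1
  · linear_combination -t * he
  · linear_combination -u * he

theorem exists_eval_linForm_eq (hdet : p * s - r * q ≠ 0) (x y : K) :
    ∃ v : Fin 2 → K, eval v (linForm p q) = x ∧ eval v (linForm r s) = y := by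
  obtain ⟨e, he⟩ : ∃ e, e * (p * s - r * q) = 1 := ⟨_, inv_mul_cancel₀ hdet⟩
  refine ⟨![e * (s * x - q * y), e * (p * y - r * x)], ?_, ?_⟩
  · simp only [eval_linForm, Matrix.cons_val_zero, Matrix.cons_val_one]
    linear_combination x * he
  · simp only [eval_linForm, Matrix.cons_val_zero, Matrix.cons_val_one]
    linear_combination y * he

end LinForm

section CubeRelation

variable {K : Type*} [Field K] [CharZero K]

theorem cube_relation_coeffs {a₁ b₁ a₂ b₂ a₃ b₃ : K}
    (h : ∀ x y : K, x ^ 3 * (a₁ * x + b₁ * y) - y ^ 3 * (a₂ * x + b₂ * y)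
      = (x - y) ^ 3 * (a₃ * x + b₃ * y)) :
    b₁ = -2 * a₁ ∧ a₂ = -2 * a₁ ∧ b₂ = a₁ := by
  have h₁₀ := h 1 0
  have h₀₁ := h 0 1
  have h₁₁ := h 1 1
  have h₁₂ := h 1 (-1)
  have h₂₁ := h 2 1
  have hb₂ : b₂ = a₁ := by linear_combination (h₁₁ + h₁₂ - 8 * h₁₀ - 8 * h₀₁) / 6
  have hb₁ : b₁ = -2 * a₁ := by linear_combination (h₂₁ - 2 * h₁₁ - 2 * h₁₀ + h₀₁) / 6
  exact ⟨hb₁, by linear_combination hb₁ - hb₂ - h₁₁, hb₂⟩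

theorem exists_eq_C_mul_of_cube_dvd {p q r s : K} (hdet : p * s - r * q ≠ 0)
    {f g : MvPolynomial (Fin 2) K} (hf : f.IsHomogeneous 4) (hg : g.IsHomogeneous 4)
    (h₁ : linForm p q ^ 3 ∣ f) (h₂ : linForm r s ^ 3 ∣ g)
    (h₃ : linForm (p - r) (q - s) ^ 3 ∣ f - g) :
    ∃ κ : K, f = C κ * (linForm p q ^ 3 * (linForm p q - 2 * linForm r s)) ∧
      g = C κ * (linForm r s ^ 3 * (linForm r s - 2 * linForm p q)) := by
  have hcofactor {t u : K} {k : MvPolynomial (Fin 2) K} (hk : k.IsHomogeneous 4)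
      (h : linForm t u ^ 3 ∣ k) :
      ∃ a b : K, k = linForm t u ^ 3 * (C a * linForm p q + C b * linForm r s) := by
    obtain ⟨m, hm, rfl⟩ :=
      exists_isHomogeneous_eq_mul_of_dvd (j := 1) ((isHomogeneous_linForm t u).pow 3) hk h
    obtain ⟨a, b, rfl⟩ := exists_eq_C_mul_linForm_add_C_mul_linForm hdet hm
    exact ⟨a, b, rfl⟩
  obtain ⟨a₃, b₃, e₃⟩ := hcofactor (hf.sub hg) h₃
  obtain ⟨a₁, b₁, rfl⟩ := hcofactor hf h₁
  obtain ⟨a₂, b₂, rfl⟩ := hcofactor hg h₂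
  obtain ⟨rfl, rfl, rfl⟩ : b₁ = -2 * a₁ ∧ a₂ = -2 * a₁ ∧ b₂ = a₁ := by
    refine cube_relation_coeffs (a₃ := a₃) (b₃ := b₃) fun x y ↦ ?_
    obtain ⟨v, rfl, rfl⟩ := exists_eval_linForm_eq hdet x y
    simpa only [← linForm_sub_linForm, map_sub, map_mul, map_add, map_pow, eval_C]
      using congrArg (eval v) e₃
  refine ⟨b₂, ?_, ?_⟩ <;> simp only [C_mul, C_neg, map_ofNat] <;> ring

end CubeRelation

section Contraction

/-- The contraction `v₁ A + v₂ B` of `ω = A dx + B dy` with the constant vector field `(v₁, v₂)`. -/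
def contraction (A B : P2) (v₁ v₂ : ℂ) : P2 := C v₁ * A + C v₂ * B

/-- The derivative along the constant vector field `(w₁, w₂)`. -/
def dirDeriv (w₁ w₂ : ℂ) : Derivation ℂ P2 P2 := w₁ • pderiv 0 + w₂ • pderiv 1

variable {A B : P2} {d : ℕ}

theorem isHomogeneous_contraction (hA : A.IsHomogeneous d) (hB : B.IsHomogeneous d) (v₁ v₂ : ℂ) :
    (contraction A B v₁ v₂).IsHomogeneous d :=
  (hA.C_mul v₁).add (hB.C_mul v₂)

theorem contraction_sub_contraction (A B : P2) (v₁ v₂ w₁ w₂ : ℂ) :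
    contraction A B v₁ v₂ - contraction A B w₁ w₂ = contraction A B (v₁ - w₁) (v₂ - w₂) := by
  simp only [contraction, C_sub]
  ring

theorem NoCommonFactor.isUnit_of_dvd_contraction (hcop : NoCommonFactor A B) {v₁ v₂ w₁ w₂ : ℂ}
    (hdet : v₁ * w₂ - v₂ * w₁ ≠ 0) {f : P2} (hv : f ∣ contraction A B v₁ v₂)
    (hw : f ∣ contraction A B w₁ w₂) : IsUnit f := by
  have hunit : IsUnit (C (v₁ * w₂ - v₂ * w₁) : P2) := (IsUnit.mk0 _ hdet).map C
  refine hcop f (hunit.dvd_mul_left.1 ?_) (hunit.dvd_mul_left.1 ?_)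
  · convert dvd_sub (hv.mul_left (C w₂)) (hw.mul_left (C v₂)) using 1
    simp only [contraction, C_sub, C_mul]
    ring
  · convert dvd_sub (hw.mul_left (C v₁)) (hv.mul_left (C w₁)) using 1
    simp only [contraction, C_sub, C_mul]
    ring

theorem NoCommonFactor.contraction_ne_zero (hcop : NoCommonFactor A B) {v₁ v₂ w₁ w₂ : ℂ}
    (hdet : v₁ * w₂ - v₂ * w₁ ≠ 0) (hw : contraction A B w₁ w₂ = 0) :
    contraction A B v₁ v₂ ≠ 0 := fun hv ↦
  not_isUnit_zero (hcop.isUnit_of_dvd_contraction hdet (zero_dvd_iff.2 hv) (zero_dvd_iff.2 hw))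

variable {p q w₁ w₂ : ℂ}

theorem dirDeriv_linForm (w₁ w₂ p q : ℂ) :
    dirDeriv w₁ w₂ (linForm p q) = C (p * w₁ + q * w₂) := by
  simp [dirDeriv, linForm, pderiv_X, smul_eq_C_mul, mul_comm]

theorem Cpoly_eq_linForm_mul_contraction (hw : p * w₁ + q * w₂ = 1) (A B : P2) :
    Cpoly A B = linForm p q * contraction A B w₁ w₂
      + linForm w₂ (-w₁) * contraction A B q (-p) := by
  have hC : (C p * C w₁ + C q * C w₂ : P2) = 1 := by rw [← C_mul, ← C_mul, ← C_add, hw, C_1]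
  simp only [Cpoly, contraction, linForm, C_neg]
  linear_combination (-(X 0 * A) - X 1 * B) * hC

theorem linForm_mul_Dpoly (hA : A.IsHomogeneous d) (hB : B.IsHomogeneous d)
    (hw : p * w₁ + q * w₂ = 1) :
    linForm w₂ (-w₁) * Dpoly A B =
      C (d : ℂ) * (contraction A B q (-p) * dirDeriv w₁ w₂ (contraction A B w₁ w₂)
        - contraction A B w₁ w₂ * dirDeriv w₁ w₂ (contraction A B q (-p))) := by
  have hC : (C p * C w₁ + C q * C w₂ : P2) = 1 := by rw [← C_mul, ← C_mul, ← C_add, hw, C_1]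
  have hA' := hA.sum_X_mul_pderiv
  have hB' := hB.sum_X_mul_pderiv
  simp only [Fin.sum_univ_two, nsmul_eq_mul] at hA' hB'
  have euler : linForm w₂ (-w₁) * Dpoly A B
      = C (d : ℂ) * (A * dirDeriv w₁ w₂ B - B * dirDeriv w₁ w₂ A) := by
    simp only [Dpoly, linForm, dirDeriv, Derivation.add_apply, Derivation.smul_apply,
      smul_eq_C_mul, C_neg, map_natCast]
    linear_combination (C w₁ * pderiv 0 B + C w₂ * pderiv 1 B) * hA'
      - (C w₁ * pderiv 0 A + C w₂ * pderiv 1 A) * hB'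
  have hdir (v₁ v₂ : ℂ) : dirDeriv w₁ w₂ (contraction A B v₁ v₂)
      = C v₁ * dirDeriv w₁ w₂ A + C v₂ * dirDeriv w₁ w₂ B := by
    simp only [contraction, ← smul_eq_C_mul, map_add, Derivation.map_smul]
  rw [euler, hdir, hdir]
  simp only [contraction, C_neg]
  linear_combination -(C (d : ℂ) * (A * dirDeriv w₁ w₂ B - B * dirDeriv w₁ w₂ A)) * hC

theorem pow_succ_dvd_contraction (hA : A.IsHomogeneous d) (hB : B.IsHomogeneous d) (hd : d ≠ 0)
    (hcop : NoCommonFactor A B) (hl : linForm p q ≠ 0) (hC : linForm p q ∣ Cpoly A B) {n : ℕ}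
    (hD : linForm p q ^ n ∣ Dpoly A B) : linForm p q ^ (n + 1) ∣ contraction A B q (-p) := by
  have hprime := prime_of_isHomogeneous_one (isHomogeneous_linForm p q) hl
  obtain ⟨w₁, w₂, hw⟩ : ∃ w₁ w₂ : ℂ, p * w₁ + q * w₂ = 1 := by
    by_cases hp : p = 0
    · have hq : q ≠ 0 := by
        rintro rfl
        simp [linForm, hp] at hl
      exact ⟨0, q⁻¹, by simp [hq]⟩
    · exact ⟨p⁻¹, 0, by simp [hp]⟩
  have hF : linForm p q ∣ contraction A B q (-p) := by
    rw [Cpoly_eq_linForm_mul_contraction hw, dvd_add_right (dvd_mul_right _ _)] at hC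
    exact (hprime.dvd_or_dvd hC).resolve_left (not_linForm_dvd_linForm hw)
  have hT : ¬ linForm p q ∣ contraction A B w₁ w₂ := fun hT ↦
    hprime.not_isUnit <| hcop.isUnit_of_dvd_contraction
      (by rw [show q * w₂ - -p * w₁ = 1 by linear_combination hw]; exact one_ne_zero) hF hT
  have hderiv : ¬ linForm p q ∣ dirDeriv w₁ w₂ (linForm p q) := by
    rw [dirDeriv_linForm, hw, C_1]
    exact hprime.not_dvd_one
  have hdunit : IsUnit (C (d : ℂ) : P2) := (IsUnit.mk0 _ (Nat.cast_ne_zero.2 hd)).map C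
  refine pow_succ_dvd_of_pow_dvd_wronskian _ hprime hderiv hT hF (hdunit.dvd_mul_left.1 ?_)
  rw [← linForm_mul_Dpoly hA hB hw]
  exact hD.mul_left _

end Contraction

section NormalForm

theorem det_ne_zero_of_not_proportional {p q r s : ℂ}
    (h : ¬ Proportional (linForm p q) (linForm r s)) : p * s - r * q ≠ 0 := by
  intro hdet
  apply h
  by_cases hp : p = 0
  · by_cases hq : q = 0
    · exact ⟨0, .inl (by simp [linForm, hp, hq])⟩
    · refine ⟨s / q, .inr ?_⟩
      rw [C_mul_linForm]
      congr 1
      · field_simp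
        linear_combination -hdet
      · field_simp
  · refine ⟨r / p, .inr ?_⟩
    rw [C_mul_linForm]
    congr 1
    · field_simp
    · field_simp
      linear_combination hdet

theorem exists_associated_linForm_sub {l₁ l₂ l₃ : P2} (h₁ : l₁.IsHomogeneous 1)
    (h₂ : l₂.IsHomogeneous 1) (h₃ : l₃.IsHomogeneous 1) (h₁₂ : ¬ Proportional l₁ l₂)
    (h₁₃ : ¬ Proportional l₁ l₃) (h₂₃ : ¬ Proportional l₂ l₃) :
    ∃ p q r s : ℂ, p * s - r * q ≠ 0 ∧ Associated (linForm p q) l₁ ∧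
      Associated (linForm r s) l₂ ∧ Associated (linForm (p - r) (q - s)) l₃ := by
  obtain ⟨p₁, q₁, rfl⟩ := exists_eq_linForm h₁
  obtain ⟨p₂, q₂, rfl⟩ := exists_eq_linForm h₂
  obtain ⟨p₃, q₃, rfl⟩ := exists_eq_linForm h₃
  have d₁₂ := det_ne_zero_of_not_proportional h₁₂
  have d₁₃ := det_ne_zero_of_not_proportional h₁₃
  have d₂₃ := det_ne_zero_of_not_proportional h₂₃
  -- Cramer: `[23] l₁ - [13] l₂ = -[12] l₃`, where `[ij]` is the determinant of `lᵢ` and `lⱼ`.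
  refine ⟨(p₂ * q₃ - p₃ * q₂) * p₁, (p₂ * q₃ - p₃ * q₂) * q₁,
    (p₁ * q₃ - p₃ * q₁) * p₂, (p₁ * q₃ - p₃ * q₁) * q₂, ?_, ?_, ?_, ?_⟩
  · convert mul_ne_zero (mul_ne_zero d₂₃ d₁₃) d₁₂ using 1
    ring
  · rw [← C_mul_linForm]
    exact associated_C_mul d₂₃ _
  · rw [← C_mul_linForm]
    exact associated_C_mul d₁₃ _
  · convert associated_C_mul (neg_ne_zero.2 d₁₂) (linForm p₃ q₃) using 1
    rw [C_mul_linForm]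
    congr 1 <;> ring

variable {A B : P2} {p q r s κ : ℂ}

theorem comp2_contraction (a₁ a₂ a₃ a₄ : ℂ) (A B : P2) (v₁ v₂ : ℂ) :
    comp2 a₁ a₂ a₃ a₄ (contraction A B v₁ v₂) =
      contraction (comp2 a₁ a₂ a₃ a₄ A) (comp2 a₁ a₂ a₃ a₄ B) v₁ v₂ := by
  simp [comp2, contraction]

theorem comp2_adjugate_linForm (p q r s : ℂ) :
    comp2 s (-q) (-r) p (linForm p q) = C (p * s - r * q) * X 0 ∧
      comp2 s (-q) (-r) p (linForm r s) = C (p * s - r * q) * X 1 := by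
  constructor <;>
    simp only [comp2, linForm, map_add, map_mul, map_sub, map_neg, algHom_C, algebraMap_eq, aeval_X,
      Matrix.cons_val_zero, Matrix.cons_val_one] <;>
    ring

theorem linConj_of_contraction_eq (hdet : p * s - r * q ≠ 0) (hκ : κ ≠ 0)
    (h₁ : contraction A B q (-p) =
      C κ * (linForm p q ^ 3 * (linForm p q - 2 * linForm r s)))
    (h₂ : contraction A B s (-r) =
      C κ * (linForm r s ^ 3 * (linForm r s - 2 * linForm p q))) :
    LinConj A B A2 B2 := by
  obtain ⟨hl₁, hl₂⟩ := comp2_adjugate_linForm p q r s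
  have hF₁ : contraction (comp2 s (-q) (-r) p A) (comp2 s (-q) (-r) p B) q (-p) =
      C κ * ((C (p * s - r * q) * X 0) ^ 3 *
        (C (p * s - r * q) * X 0 - 2 * (C (p * s - r * q) * X 1))) := by
    rw [← comp2_contraction, h₁, ← hl₁, ← hl₂]
    simp only [comp2, map_mul, map_sub, map_pow, map_ofNat, algHom_C, algebraMap_eq]
  have hF₂ : contraction (comp2 s (-q) (-r) p A) (comp2 s (-q) (-r) p B) s (-r) =
      C κ * ((C (p * s - r * q) * X 1) ^ 3 *
        (C (p * s - r * q) * X 1 - 2 * (C (p * s - r * q) * X 0))) := by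
    rw [← comp2_contraction, h₂, ← hl₁, ← hl₂]
    simp only [comp2, map_mul, map_sub, map_pow, map_ofNat, algHom_C, algebraMap_eq]
  refine ⟨s, -q, -r, p, -κ * (p * s - r * q) ^ 4, by convert hdet using 1; ring,
    mul_ne_zero (neg_ne_zero.2 hκ) (pow_ne_zero 4 hdet), ?_, ?_⟩
  · simp only [A2, contraction, C_mul, C_neg, C_pow] at hF₂ ⊢
    linear_combination hF₂
  · simp only [B2, contraction, C_mul, C_neg, C_pow] at hF₁ ⊢
    linear_combination -hF₁

end NormalForm

/-- If the homogeneous foliation `ω = A dx + B dy` of degree 4 is convex of type `3·R₂`,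
then `ω` is linearly conjugate to `ω₂ = y³(2x−y)dx + x³(x−2y)dy`. -/
theorem type_three_R2_classification
    (A B : P2) (hA : A.IsHomogeneous 4) (hB : B.IsHomogeneous 4)
    (hcop : NoCommonFactor A B)
    (c : ℂ) (hc : c ≠ 0) (l₁ l₂ l₃ : P2)
    (h₁ : l₁.IsHomogeneous 1) (h₂ : l₂.IsHomogeneous 1) (h₃ : l₃.IsHomogeneous 1)
    (hn₁ : l₁ ≠ 0) (hn₂ : l₂ ≠ 0) (hn₃ : l₃ ≠ 0)
    (hp₁₂ : ¬ Proportional l₁ l₂) (hp₁₃ : ¬ Proportional l₁ l₃) (hp₂₃ : ¬ Proportional l₂ l₃)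
    (hdvd₁ : l₁ ∣ Cpoly A B) (hdvd₂ : l₂ ∣ Cpoly A B) (hdvd₃ : l₃ ∣ Cpoly A B)
    (hD : Dpoly A B = C c * l₁ ^ 2 * l₂ ^ 2 * l₃ ^ 2) :
    LinConj A B A2 B2 := by
  obtain ⟨p, q, r, s, hdet, a₁, a₂, a₃⟩ :=
    exists_associated_linForm_sub h₁ h₂ h₃ hp₁₂ hp₁₃ hp₂₃
  have hcube {t u : ℂ} {l : P2} (ha : Associated (linForm t u) l) (hl : l ≠ 0)
      (hC : l ∣ Cpoly A B) (hD : l ^ 2 ∣ Dpoly A B) :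
      linForm t u ^ 3 ∣ contraction A B u (-t) :=
    pow_succ_dvd_contraction hA hB four_ne_zero hcop (ha.ne_zero_iff.2 hl) (ha.dvd.trans hC)
      ((ha.pow_pow (n := 2)).dvd.trans hD)
  have c₁ := hcube a₁ hn₁ hdvd₁ ⟨C c * l₂ ^ 2 * l₃ ^ 2, by rw [hD]; ring⟩
  have c₂ := hcube a₂ hn₂ hdvd₂ ⟨C c * l₁ ^ 2 * l₃ ^ 2, by rw [hD]; ring⟩
  have c₃ := hcube a₃ hn₃ hdvd₃ ⟨C c * l₁ ^ 2 * l₂ ^ 2, by rw [hD]; ring⟩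
  rw [show -(p - r) = -p - -r by ring, ← contraction_sub_contraction] at c₃
  obtain ⟨κ, e₁, e₂⟩ := exists_eq_C_mul_of_cube_dvd hdet (isHomogeneous_contraction hA hB _ _)
    (isHomogeneous_contraction hA hB _ _) c₁ c₂ c₃
  have hκ : κ ≠ 0 := by
    rintro rfl
    have hdet' : q * -r - -p * s ≠ 0 := by convert hdet using 1; ring
    exact hcop.contraction_ne_zero hdet' (by simp [e₂]) (by simp [e₁])
  exact linConj_of_contraction_eq hdet hκ e₁ e₂
end
end
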